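/- arXiv:2503.18518 — 2 statements merged into one kernel-verified Lean document; each statement's English description precedes it below -/
import Mathlib

section
/- Let μ be a permuton that is absolutely continuous with respect to two-dimensional Lebesgue measure on [0,1]². Then lim_{n→∞} H_n(μ)/(n·log n) = 1. -/
/-!
The upper bound `H_n(μ) ≤ log n! ≤ n log n` holds because there are only `n!` patterns. For the
lower bound, let `α` and `β` be the marginals of `μ` and truncate its density: there are a set `G`
and a constant `M` such that `μ G` is close to `1` and `μ ≤ M • (α ⊗ β)` on `G`. Record with a
sampled pattern `π` also the set `S` of indices whose points fall in `G`. Forgetting the second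
coordinates of the points outside `G` and comparing the remaining ones with `α ⊗ β`, whose
coordinates are independent, bounds the probability of `(π, S)` by `M ^ |S| / |S|!`, which is at
most `e ^ n (M / n) ^ |S|`. As `S` takes only `2 ^ n` values and has mean size `n μ(G)`, Jensen's
inequality gives `H_n(μ) ≥ n μ(G) log (n / M) - n (1 + log 2)`.
-/

open MeasureTheory Filter

/-- The probability that `n` i.i.d. points sampled from `μ` realize the pattern `π`. -/
noncomputable def patternProb {n : ℕ} (μ : Measure (ℝ × ℝ)) (π : Equiv.Perm (Fin n)) : ℝ :=
  (n.factorial : ℝ) *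
    ((Measure.pi fun _ : Fin n => μ)
      {p : Fin n → ℝ × ℝ | ∀ i j : Fin n, i < j →
        (p i).1 < (p j).1 ∧ ((p i).2 < (p j).2 ↔ π i < π j)}).toReal

/-- Sampling entropy `H_n(μ)`. -/
noncomputable def samplingEntropy (μ : Measure (ℝ × ℝ)) (n : ℕ) : ℝ :=
  ∑ π : Equiv.Perm (Fin n), Real.negMulLog (patternProb μ π)

/-- A pre-permuton: a Borel probability measure on `ℝ²` with atomless marginals. -/
def IsPrePermuton (μ : Measure (ℝ × ℝ)) : Prop :=
  IsProbabilityMeasure μ ∧ (∀ x : ℝ, μ.map Prod.fst {x} = 0) ∧ ∀ y : ℝ, μ.map Prod.snd {y} = 0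

/-- A permuton: a Borel probability measure on `[0,1]²` with uniform marginals. -/
def IsPermuton (μ : Measure (ℝ × ℝ)) : Prop :=
  μ (Set.Icc (0:ℝ) 1 ×ˢ Set.Icc (0:ℝ) 1)ᶜ = 0 ∧
  μ.map Prod.fst = volume.restrict (Set.Icc (0:ℝ) 1) ∧
  μ.map Prod.snd = volume.restrict (Set.Icc (0:ℝ) 1)

open scoped ENNReal NNReal Nat

section Measure

lemma pi_le_prod_smul_pi {ι : Type*} [Fintype ι] {X : ι → Type*} [∀ i, MeasurableSpace (X i)]
    {ν ρ : ∀ i, Measure (X i)} [∀ i, SigmaFinite (ν i)] [∀ i, SigmaFinite (ρ i)] {c : ι → ℝ≥0}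
    (h : ∀ i, ν i ≤ c i • ρ i) :
    Measure.pi ν ≤ (∏ i, c i) • Measure.pi ρ := by
  have pi_smul : Measure.pi (fun i => c i • ρ i) = (∏ i, c i) • Measure.pi ρ :=
    Measure.pi_eq fun s _ => by
      simp only [ENNReal.smul_def, Measure.smul_apply, smul_eq_mul, Measure.pi_pi,
        Finset.prod_mul_distrib, ENNReal.ofNNReal_finsetProd]
  rw [← pi_smul]
  refine Measure.le_iff.2 fun s hs => ?_
  rw [Measure.pi_def fun i => c i • ρ i, toMeasure_apply _ _ hs]
  suffices (Measure.pi ν).toOuterMeasure ≤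
    OuterMeasure.pi fun i => (c i • ρ i).toOuterMeasure from this s
  refine OuterMeasure.le_pi.2 fun t _ => ?_
  calc Measure.pi ν (Set.univ.pi t) = ∏ i, ν i (t i) := Measure.pi_pi ν t
    _ ≤ ∏ i, (c i • ρ i) (t i) := Finset.prod_le_prod' fun i _ => h i (t i)

lemma pi_preimage_le_prod_mul_pi_preimage {ι : Type*} [Fintype ι] {X Y : ι → Type*}
    [∀ i, MeasurableSpace (X i)] [∀ i, MeasurableSpace (Y i)] {f : ∀ i, X i → Y i}
    (hf : ∀ i, Measurable (f i)) {ν ρ : ∀ i, Measure (X i)} [∀ i, IsFiniteMeasure (ν i)]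
    [∀ i, IsFiniteMeasure (ρ i)] {c : ι → ℝ≥0}
    (h : ∀ i, (ν i).map (f i) ≤ c i • (ρ i).map (f i)) {F : Set (∀ i, Y i)}
    (hF : MeasurableSet F) :
    Measure.pi ν ((fun p i => f i (p i)) ⁻¹' F) ≤
      (∏ i, (c i : ℝ≥0∞)) * Measure.pi ρ ((fun p i => f i (p i)) ⁻¹' F) := by
  have hf' : Measurable fun (p : ∀ i, X i) i => f i (p i) := by fun_prop
  rw [← Measure.map_apply hf' hF, ← Measure.map_apply hf' hF,
    Measure.pi_map_pi fun i => (hf i).aemeasurable, Measure.pi_map_pi fun i => (hf i).aemeasurable]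
  simpa [ENNReal.smul_def] using pi_le_prod_smul_pi h F

lemma measurePreserving_comp_of_injective {ι κ : Type*} [Fintype ι] [Fintype κ] {X : Type*}
    [MeasurableSpace X] (μ : Measure X) [IsProbabilityMeasure μ] {f : κ → ι}
    (hf : Function.Injective f) :
    MeasurePreserving (fun p : ι → X => p ∘ f) (Measure.pi fun _ => μ) (Measure.pi fun _ => μ) where
  measurable := by fun_prop
  map_eq := by
    simpa only [Measure.infinitePi_eq_pi, Function.comp_def] using
      Measure.map_infinitePi_infinitePi_of_inj (P := fun _ : ι => μ) hf

lemma ae_injective_pi {ι : Type*} [Fintype ι] {X : Type*} [MeasurableSpace X] [MeasurableEq X]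
    (μ : Measure X) [IsProbabilityMeasure μ] [NullSingletonClass μ] :
    ∀ᵐ p ∂Measure.pi fun _ : ι => μ, Function.Injective p := by
  have prod_ne : ∀ᵐ q ∂μ.prod μ, q.1 ≠ q.2 :=
    (Measure.ae_prod_iff_ae_ae measurableSet_diagonal.compl).2 <|
      ae_of_all _ fun x => (Measure.ae_ne μ x).mono fun _ => Ne.symm
  have apply_ne (i j : ι) (hij : i ≠ j) : ∀ᵐ p ∂Measure.pi fun _ : ι => μ, p i ≠ p j := by
    have map_eq := Measure.infinitePi_map_eval_prod (P := fun _ : ι => μ) hij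
    rw [Measure.infinitePi_eq_pi] at map_eq
    exact ae_of_ae_map (f := fun p : ι → X => (p i, p j)) (by fun_prop) (map_eq ▸ prod_ne)
  have apply_ne' : ∀ᵐ p ∂Measure.pi fun _ : ι => μ, ∀ i j, i ≠ j → p i ≠ p j := by
    simpa only [ae_all_iff] using apply_ne
  filter_upwards [apply_ne'] with p hp i j hij
  exact not_imp_not.1 (hp i j) hij

lemma ae_injective_pi_map {ι : Type*} [Fintype ι] {X Y : Type*} [MeasurableSpace X]
    [MeasurableSpace Y] [MeasurableEq Y] (μ : Measure X) [IsProbabilityMeasure μ] {f : X → Y}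
    (hf : Measurable f) [NullSingletonClass (μ.map f)] :
    ∀ᵐ p ∂Measure.pi fun _ : ι => μ, Function.Injective fun i => f (p i) := by
  have := Measure.isProbabilityMeasure_map (μ := μ) hf.aemeasurable
  have measurable_comp : Measurable fun (p : ι → X) i => f (p i) := by fun_prop
  have map_eq : (Measure.pi fun _ : ι => μ).map (fun p i => f (p i)) =
      Measure.pi fun _ => μ.map f := Measure.pi_map_pi fun _ => hf.aemeasurable
  exact ae_of_ae_map measurable_comp.aemeasurable (map_eq ▸ ae_injective_pi (μ.map f))

lemma map_comp_fst_restrict_le {X Y Z : Type*} [MeasurableSpace X] [MeasurableSpace Y]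
    [MeasurableSpace Z] (μ : Measure (X × Y)) [IsProbabilityMeasure μ] (s : Set (X × Y))
    {g : X → Z} (hg : Measurable g) :
    (μ.restrict s).map (fun q => g q.1) ≤ (μ.fst.prod μ.snd).map fun q => g q.1 :=
  calc (μ.restrict s).map (fun q => g q.1) ≤ μ.map fun q => g q.1 :=
        Measure.map_mono Measure.restrict_le_self (by fun_prop)
    _ = μ.fst.map g := (Measure.map_map hg measurable_fst).symm
    _ = (μ.fst.prod μ.snd).fst.map g := by rw [Measure.fst_prod]
    _ = (μ.fst.prod μ.snd).map fun q => g q.1 := Measure.map_map hg measurable_fst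

lemma exists_restrict_le_smul_of_absolutelyContinuous {X : Type*} [MeasurableSpace X]
    {μ κ : Measure X} [SigmaFinite μ] [SigmaFinite κ] (hμκ : μ ≪ κ) {b : ℝ≥0∞}
    (hb : b < μ Set.univ) :
    ∃ (G : Set X) (M : ℝ≥0), MeasurableSet G ∧ 0 < M ∧ b < μ G ∧ μ.restrict G ≤ M • κ := by
  set f := μ.rnDeriv κ
  have hf : Measurable f := Measure.measurable_rnDeriv μ κ
  let G (m : ℕ) : Set X := {x | f x ≤ m}
  have hG (m : ℕ) : MeasurableSet (G m) := measurableSet_le hf measurable_const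
  have G_mono : Monotone G := fun m k hmk x (hx : f x ≤ m) => hx.trans (Nat.cast_le.2 hmk)
  have iUnion_ae : (⋃ m, G m) =ᵐ[μ] Set.univ := by
    rw [eventuallyEq_univ]
    filter_upwards [hμκ.ae_le (Measure.rnDeriv_lt_top μ κ)] with x hx
    obtain ⟨m, hm⟩ := ENNReal.exists_nat_gt hx.ne
    exact Set.mem_iUnion.2 ⟨m, hm.le⟩
  rw [← measure_congr iUnion_ae, G_mono.measure_iUnion, lt_iSup_iff] at hb
  obtain ⟨m, hm⟩ := hb
  refine ⟨G m, m + 1, hG m, by positivity, hm, ?_⟩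
  calc μ.restrict (G m) = (κ.restrict (G m)).withDensity f := by
        rw [← restrict_withDensity (hG m), Measure.withDensity_rnDeriv_eq μ κ hμκ]
    _ ≤ (κ.restrict (G m)).withDensity fun _ => ((m + 1 : ℝ≥0) : ℝ≥0∞) :=
        withDensity_mono <| ae_restrict_of_forall_mem (hG m) fun x hx =>
          le_trans hx (by push_cast; exact le_self_add)
    _ = (m + 1 : ℝ≥0) • κ.restrict (G m) := withDensity_const _
    _ ≤ (m + 1 : ℝ≥0) • κ := by gcongr; exact Measure.restrict_le_self

end Measure

section Order

/-- The tuples of points that are increasing in the first coordinate and whose entries with indices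
`e 0, e 1, …` are increasing in the second. A pattern `π` is the case `e = π.symm`; a shorter `e`
constrains only some of the second coordinates. -/
def sortedCell {X Y : Type*} [Preorder X] [Preorder Y] {n k : ℕ} (e : Fin k → Fin n) :
    Set (Fin n → X × Y) :=
  {p | StrictMono (fun i => (p i).1) ∧ StrictMono fun j => (p (e j)).2}

lemma eq_sort_of_strictMono {n : ℕ} {X : Type*} [LinearOrder X] {x : Fin n → X}
    {σ : Equiv.Perm (Fin n)} (hσ : StrictMono (x ∘ σ)) : σ = Tuple.sort x :=
  Tuple.eq_sort_iff.2 ⟨hσ.monotone, fun _ _ hij heq => absurd heq (hσ hij).ne⟩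

lemma strictMono_comp_sort {n : ℕ} {X : Type*} [LinearOrder X] {x : Fin n → X}
    (hx : Function.Injective x) : StrictMono (x ∘ Tuple.sort x) :=
  (Tuple.monotone_sort x).strictMono_of_injective (hx.comp (Equiv.injective _))

variable {X : Type*} [LinearOrder X] [TopologicalSpace X] [OrderClosedTopology X]
  [SecondCountableTopology X] [MeasurableSpace X] [OpensMeasurableSpace X]

lemma measurableSet_setOf_strictMono {ι : Type*} [Countable ι] [Preorder ι] :
    MeasurableSet {x : ι → X | StrictMono x} := by
  simp only [StrictMono, Set.ofPred_forall]
  exact .iInter fun i => .iInter fun j => .iInter fun _ =>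
    measurableSet_lt (measurable_pi_apply i) (measurable_pi_apply j)

lemma factorial_mul_pi_strictMono_le_one (μ : Measure X) [IsProbabilityMeasure μ] (k : ℕ) :
    (k ! : ℝ≥0∞) * Measure.pi (fun _ : Fin k => μ) {x | StrictMono x} ≤ 1 := by
  set P := Measure.pi fun _ : Fin k => μ
  let A (σ : Equiv.Perm (Fin k)) : Set (Fin k → X) := {x | StrictMono (x ∘ σ)}
  have mp (σ : Equiv.Perm (Fin k)) := measurePreserving_comp_of_injective μ σ.injective
  have hA (σ) : MeasurableSet (A σ) := (mp σ).measurable measurableSet_setOf_strictMono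
  have disjoint_A : Pairwise (Function.onFun Disjoint A) := fun σ τ hne =>
    Set.disjoint_left.2 fun x hσ hτ =>
      hne ((eq_sort_of_strictMono hσ).trans (eq_sort_of_strictMono hτ).symm)
  have P_A (σ) : P (A σ) = P {x | StrictMono x} :=
    (mp σ).measure_preimage measurableSet_setOf_strictMono.nullMeasurableSet
  calc (k ! : ℝ≥0∞) * P {x | StrictMono x} = ∑ σ, P (A σ) := by
        simp [P_A, Fintype.card_perm]
    _ = P (⋃ σ, A σ) := by rw [measure_iUnion disjoint_A hA, tsum_fintype]
    _ ≤ 1 := prob_le_one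

lemma factorial_mul_pi_strictMono_comp_le_one {ι : Type*} [Fintype ι] (μ : Measure X)
    [IsProbabilityMeasure μ] {k : ℕ} (e : Fin k ↪ ι) :
    (k ! : ℝ≥0∞) * Measure.pi (fun _ : ι => μ) {x | StrictMono (x ∘ e)} ≤ 1 := by
  have measure_eq : Measure.pi (fun _ : ι => μ) {x | StrictMono (x ∘ e)} =
      Measure.pi (fun _ : Fin k => μ) {x | StrictMono x} :=
    (measurePreserving_comp_of_injective μ e.injective).measure_preimage
      measurableSet_setOf_strictMono.nullMeasurableSet
  exact measure_eq ▸ factorial_mul_pi_strictMono_le_one μ k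

variable {Y : Type*} [LinearOrder Y] [TopologicalSpace Y] [OrderClosedTopology Y]
  [SecondCountableTopology Y] [MeasurableSpace Y] [OpensMeasurableSpace Y]

lemma measurableSet_sortedCell {n k : ℕ} (e : Fin k → Fin n) :
    MeasurableSet (sortedCell e : Set (Fin n → X × Y)) := by
  have measurable_fst : Measurable fun (p : Fin n → X × Y) i => (p i).1 := by fun_prop
  have measurable_snd : Measurable fun (p : Fin n → X × Y) j => (p (e j)).2 := by fun_prop
  exact (measurable_fst measurableSet_setOf_strictMono).inter
    (measurable_snd measurableSet_setOf_strictMono)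

lemma factorial_mul_pi_prod_sortedCell_mul_factorial_le_one (α : Measure X) (β : Measure Y)
    [IsProbabilityMeasure α] [IsProbabilityMeasure β] {n k : ℕ} (e : Fin k ↪ Fin n) :
    (n ! : ℝ≥0∞) * Measure.pi (fun _ : Fin n => α.prod β) (sortedCell e) * k ! ≤ 1 := by
  have measure_eq : Measure.pi (fun _ : Fin n => α.prod β) (sortedCell e) =
      Measure.pi (fun _ : Fin n => α) {x | StrictMono x} *
        Measure.pi (fun _ : Fin n => β) {y | StrictMono (y ∘ e)} := by
    rw [← Measure.prod_prod]
    exact (measurePreserving_arrowProdEquivProdArrow X Y (Fin n) (fun _ => α)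
      (fun _ => β)).measure_preimage_equiv ({x | StrictMono x} ×ˢ {y | StrictMono (y ∘ e)})
  calc _ = ((n ! : ℝ≥0∞) * Measure.pi (fun _ : Fin n => α) {x | StrictMono x}) *
        (k ! * Measure.pi (fun _ : Fin n => β) {y | StrictMono (y ∘ e)}) := by rw [measure_eq]; ring
    _ ≤ 1 * 1 := mul_le_mul' (factorial_mul_pi_strictMono_le_one α n)
        (factorial_mul_pi_strictMono_comp_le_one β e)
    _ = 1 := one_mul 1

end Order

section Entropy

open Real

lemma sum_mul_le_negMulLog_sum_add {ι : Type*} {s : Finset ι} {a u : ι → ℝ} {C : ℝ}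
    (ha : ∀ i ∈ s, 0 ≤ a i) (hC : ∑ i ∈ s, a i * exp (u i) ≤ C) :
    ∑ i ∈ s, a i * u i ≤ negMulLog (∑ i ∈ s, a i) + (∑ i ∈ s, a i) * log C := by
  set t := ∑ i ∈ s, a i with ht
  rcases (Finset.sum_nonneg ha).eq_or_lt with ht0 | ht0
  · have a_eq_zero := (Finset.sum_eq_zero_iff_of_nonneg ha).1 ht0.symm
    rw [ht, ← ht0, negMulLog_zero, zero_mul, add_zero]
    exact (Finset.sum_eq_zero fun i hi => by rw [a_eq_zero i hi, zero_mul]).le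
  have C_pos : 0 < C := by
    obtain ⟨j, hj, a_pos⟩ := (Finset.sum_pos_iff_of_nonneg ha).1 ht0
    refine lt_of_lt_of_le (Finset.sum_pos' (fun i hi => ?_) ⟨j, hj, ?_⟩) hC
    · exact mul_nonneg (ha i hi) (exp_pos _).le
    · exact mul_pos a_pos (exp_pos _)
  have term_le (i) (hi : i ∈ s) :
      a i * (u i + log t - log C) ≤ a i * exp (u i) * (t / C) - a i := by
    have exp_eq : exp (u i + log t - log C) = exp (u i) * (t / C) := by
      rw [exp_sub, exp_add, exp_log ht0, exp_log C_pos, mul_div_assoc]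
    have := mul_le_mul_of_nonneg_left (add_one_le_exp (u i + log t - log C)) (ha i hi)
    rw [exp_eq] at this
    linarith
  have sum_le : ∑ i ∈ s, a i * u i + t * log t - t * log C ≤ 0 := by
    calc _ = ∑ i ∈ s, a i * (u i + log t - log C) := by
          simp only [mul_sub, mul_add, Finset.sum_sub_distrib, Finset.sum_add_distrib,
            ← Finset.sum_mul, ht]
      _ ≤ ∑ i ∈ s, (a i * exp (u i) * (t / C) - a i) := Finset.sum_le_sum term_le
      _ = (∑ i ∈ s, a i * exp (u i)) * (t / C) - t := by
          rw [Finset.sum_sub_distrib, Finset.sum_mul]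
      _ ≤ C * (t / C) - t := by gcongr
      _ = 0 := by rw [mul_div_cancel₀ _ C_pos.ne', sub_self]
  rw [negMulLog]
  linarith

lemma sum_negMulLog_le_log_card {ι : Type*} {s : Finset ι} {a : ι → ℝ} (ha : ∀ i ∈ s, 0 ≤ a i)
    (hsum : ∑ i ∈ s, a i = 1) : ∑ i ∈ s, negMulLog (a i) ≤ log s.card := by
  have term_le (i) (hi : i ∈ s) : a i * exp (-log (a i)) ≤ 1 := by
    rcases (ha i hi).eq_or_lt with h | h
    · simp [← h]
    · rw [exp_neg, exp_log h, mul_inv_cancel₀ h.ne']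
  have := sum_mul_le_negMulLog_sum_add ha
    ((Finset.sum_le_sum term_le).trans_eq (by simp : ∑ _ ∈ s, (1 : ℝ) = s.card))
  simpa [hsum, negMulLog] using this

lemma mul_div_pow_le_exp {a x M : ℝ} {k : ℕ} (hx : 0 ≤ x) (hM : 0 < M) (ha : 0 ≤ a)
    (h : a * k ! ≤ M ^ k) : a * (x / M) ^ k ≤ exp x := by
  have x_pow_le : x ^ k ≤ exp x * k ! :=
    (div_le_iff₀ (by positivity)).1 (pow_div_factorial_le_exp x hx k)
  rw [div_pow, mul_div_assoc', div_le_iff₀ (by positivity)]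
  calc a * x ^ k ≤ a * (exp x * k !) := by gcongr
    _ = exp x * (a * k !) := by ring
    _ ≤ exp x * M ^ k := by gcongr

end Entropy

section PatternCell

variable {n : ℕ}

/-- The samples that are sorted by first coordinate and realize the pattern `π`. Reindexing makes
every sample with distinct coordinates fall into exactly one cell, whence the factor `n !` in
`patternProb_eq`. -/
def patternCell (π : Equiv.Perm (Fin n)) : Set (Fin n → ℝ × ℝ) :=
  sortedCell π.symm

lemma measurableSet_patternCell (π : Equiv.Perm (Fin n)) : MeasurableSet (patternCell π) :=
  measurableSet_sortedCell π.symm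

lemma mem_patternCell_iff {π : Equiv.Perm (Fin n)} {p : Fin n → ℝ × ℝ}
    (hp : Function.Injective fun i => (p i).2) :
    p ∈ patternCell π ↔
      ∀ i j, i < j → (p i).1 < (p j).1 ∧ ((p i).2 < (p j).2 ↔ π i < π j) := by
  constructor
  · rintro ⟨fst_mono, snd_mono⟩ i j hij
    exact ⟨fst_mono hij, by simpa using snd_mono.lt_iff_lt (a := π i) (b := π j)⟩
  · refine fun h => ⟨fun i j hij => (h i j hij).1, fun i j hij => ?_⟩
    rcases lt_trichotomy (π.symm i) (π.symm j) with hlt | heq | hgt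
    · exact (h _ _ hlt).2.2 (by simpa using hij)
    · exact absurd (π.symm.injective heq) hij.ne
    · have snd_le : ¬(p (π.symm j)).2 < (p (π.symm i)).2 := by
        simpa [(h _ _ hgt).2] using hij.le
      exact (not_lt.1 snd_le).lt_of_ne fun heq => hgt.ne' (hp heq)

lemma disjoint_comp_preimage_patternCell :
    Pairwise (Function.onFun Disjoint fun σπ : Equiv.Perm (Fin n) × Equiv.Perm (Fin n) =>
      (fun p : Fin n → ℝ × ℝ => p ∘ σπ.1) ⁻¹' patternCell σπ.2) := by
  rintro ⟨σ, π⟩ ⟨σ', π'⟩ hne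
  refine Set.disjoint_left.2 fun p ⟨fst_mono, snd_mono⟩ ⟨fst_mono', snd_mono'⟩ => hne ?_
  obtain rfl : σ = σ' :=
    (eq_sort_of_strictMono (x := fun i => (p i).1) fst_mono).trans
      (eq_sort_of_strictMono fst_mono').symm
  have symm_eq : π.symm = π'.symm :=
    (eq_sort_of_strictMono (x := fun i => (p (σ i)).2) snd_mono).trans
      (eq_sort_of_strictMono snd_mono').symm
  rw [Equiv.symm_bijective.injective symm_eq]

lemma exists_comp_mem_patternCell {p : Fin n → ℝ × ℝ}
    (hfst : Function.Injective fun i => (p i).1) (hsnd : Function.Injective fun i => (p i).2) :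
    ∃ σ π : Equiv.Perm (Fin n), p ∘ σ ∈ patternCell π :=
  let σ := Tuple.sort fun i => (p i).1
  ⟨σ, (Tuple.sort fun i => (p (σ i)).2).symm, strictMono_comp_sort hfst,
    strictMono_comp_sort (hsnd.comp σ.injective)⟩

variable {μ : Measure (ℝ × ℝ)}

lemma IsPrePermuton.ae_injective_fst_snd (hμ : IsPrePermuton μ) :
    ∀ᵐ p ∂Measure.pi fun _ : Fin n => μ,
      Function.Injective (fun i => (p i).1) ∧ Function.Injective fun i => (p i).2 := by
  obtain ⟨_, hfst, hsnd⟩ := hμ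
  have : NullSingletonClass (μ.map Prod.fst) := ⟨hfst⟩
  have : NullSingletonClass (μ.map Prod.snd) := ⟨hsnd⟩
  exact (ae_injective_pi_map μ measurable_fst).and (ae_injective_pi_map μ measurable_snd)

lemma IsPrePermuton.patternProb_eq (hμ : IsPrePermuton μ) (π : Equiv.Perm (Fin n)) :
    patternProb μ π = n ! * (Measure.pi fun _ => μ).real (patternCell π) := by
  rw [patternProb, measureReal_def]
  congr 2
  refine measure_congr ?_
  filter_upwards [hμ.ae_injective_fst_snd] with p hp
  exact propext (mem_patternCell_iff hp.2).symm

lemma IsPrePermuton.sum_setIntegral_patternCell (hμ : IsPrePermuton μ)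
    {f : (Fin n → ℝ × ℝ) → ℝ} (hf : Integrable f (Measure.pi fun _ => μ))
    (f_comp : ∀ (σ : Equiv.Perm (Fin n)) p, f (p ∘ σ) = f p) :
    ∑ π, n ! * ∫ p in patternCell π, f p ∂(Measure.pi fun _ => μ) =
      ∫ p, f p ∂(Measure.pi fun _ => μ) := by
  have := hμ.1
  set P := Measure.pi fun _ : Fin n => μ
  let A (σπ : Equiv.Perm (Fin n) × Equiv.Perm (Fin n)) : Set (Fin n → ℝ × ℝ) :=
    (fun p => p ∘ σπ.1) ⁻¹' patternCell σπ.2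
  have mp (σ : Equiv.Perm (Fin n)) := measurePreserving_comp_of_injective μ σ.injective
  have hA (σπ) : MeasurableSet (A σπ) := (mp σπ.1).measurable (measurableSet_patternCell σπ.2)
  have iUnion_A : (⋃ σπ, A σπ) =ᵐ[P] Set.univ := by
    rw [eventuallyEq_univ]
    filter_upwards [hμ.ae_injective_fst_snd] with p hp
    obtain ⟨σ, π, hσπ⟩ := exists_comp_mem_patternCell hp.1 hp.2
    exact Set.mem_iUnion.2 ⟨(σ, π), hσπ⟩
  have integral_A (σ π) : ∫ p in A (σ, π), f p ∂P = ∫ p in patternCell π, f p ∂P := by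
    calc ∫ p in A (σ, π), f p ∂P = ∫ p in A (σ, π), f (p ∘ σ) ∂P := by simp only [f_comp]
      _ = ∫ p in patternCell π, f p ∂P.map fun p => p ∘ σ :=
        (setIntegral_map (measurableSet_patternCell π)
          ((mp σ).map_eq.symm ▸ hf.aestronglyMeasurable) (mp σ).measurable.aemeasurable).symm
      _ = ∫ p in patternCell π, f p ∂P := by rw [(mp σ).map_eq]
  calc ∑ π, n ! * ∫ p in patternCell π, f p ∂P = ∑ σπ, ∫ p in A σπ, f p ∂P := by
        simp [Fintype.sum_prod_type, integral_A, Fintype.card_perm, Finset.mul_sum]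
    _ = ∫ p in ⋃ σπ, A σπ, f p ∂P :=
        (integral_iUnion_fintype hA disjoint_comp_preimage_patternCell
          fun _ => hf.integrableOn).symm
    _ = ∫ p, f p ∂P := by rw [setIntegral_congr_set iUnion_A, setIntegral_univ]

lemma patternProb_nonneg (μ : Measure (ℝ × ℝ)) (π : Equiv.Perm (Fin n)) :
    0 ≤ patternProb μ π :=
  mul_nonneg (Nat.cast_nonneg _) ENNReal.toReal_nonneg

lemma IsPrePermuton.sum_patternProb (hμ : IsPrePermuton μ) (n : ℕ) :
    ∑ π : Equiv.Perm (Fin n), patternProb μ π = 1 := by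
  have := hμ.1
  simpa [hμ.patternProb_eq] using
    hμ.sum_setIntegral_patternCell (n := n) (integrable_const 1) fun _ _ => rfl

lemma IsPrePermuton.samplingEntropy_le (hμ : IsPrePermuton μ) (n : ℕ) :
    samplingEntropy μ n ≤ n * Real.log n :=
  calc samplingEntropy μ n ≤ Real.log (Finset.univ : Finset (Equiv.Perm (Fin n))).card :=
        sum_negMulLog_le_log_card (fun π _ => patternProb_nonneg μ π) (hμ.sum_patternProb n)
    _ = Real.log n ! := by rw [Finset.card_univ, Fintype.card_perm, Fintype.card_fin]
    _ ≤ Real.log (n ^ n : ℕ) :=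
        Real.log_le_log (by positivity) (by exact_mod_cast n.factorial_le_pow)
    _ = n * Real.log n := by push_cast; exact Real.log_pow n n

end PatternCell

section GoodIndices

open scoped Classical in
/-- The indices of the sampled points that fall in `G`, the part of the plane on which the density
of `μ` is bounded. -/
noncomputable def goodIndices {ι X : Type*} [Fintype ι] (G : Set X) (p : ι → X) : Finset ι :=
  {i | p i ∈ G}

section

variable {ι X : Type*} [Fintype ι] {G : Set X}

@[simp]
lemma mem_goodIndices {p : ι → X} {i : ι} : i ∈ goodIndices G p ↔ p i ∈ G := by
  simp [goodIndices]

lemma card_goodIndices_comp (G : Set X) (σ : Equiv.Perm ι) (p : ι → X) :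
    (goodIndices G (p ∘ σ)).card = (goodIndices G p).card :=
  Finset.card_equiv σ fun i => by simp

lemma goodIndices_preimage_singleton [DecidableEq ι] (G : Set X) (S : Finset ι) :
    goodIndices G ⁻¹' {S} = Set.univ.pi fun i => if i ∈ S then G else Gᶜ := by
  ext p
  simp only [Set.mem_preimage, Set.mem_singleton_iff, Finset.ext_iff, mem_goodIndices,
    Set.mem_univ_pi]
  refine forall_congr' fun i => ?_
  by_cases hi : i ∈ S <;> simp [hi]

variable [MeasurableSpace X]

lemma measurable_goodIndices (hG : MeasurableSet G) :
    Measurable (goodIndices G : (ι → X) → Finset ι) :=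
  measurable_finset_iff.2 fun i => by
    simpa [Function.comp_def] using hG.mem.comp (measurable_pi_apply i)

lemma integral_card_goodIndices (μ : Measure X) [IsProbabilityMeasure μ] (hG : MeasurableSet G) :
    ∫ p, ((goodIndices G p).card : ℝ) ∂Measure.pi (fun _ : ι => μ) =
      Fintype.card ι * μ.real G := by
  have card_eq (p : ι → X) : ((goodIndices G p).card : ℝ) = ∑ i, G.indicator 1 (p i) := by
    classical simp [goodIndices, Set.indicator_apply]
  have integrable_indicator : Integrable (G.indicator (1 : X → ℝ)) μ :=
    (integrable_const 1).indicator hG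
  simp only [card_eq]
  rw [integral_finsetSum _ fun i _ => integrable_comp_eval integrable_indicator]
  have integral_indicator (i : ι) :
      ∫ p, G.indicator 1 (p i) ∂Measure.pi (fun _ : ι => μ) = μ.real G :=
    (integral_comp_eval (μ := fun _ => μ) integrable_indicator.aestronglyMeasurable).trans
      (integral_indicator_one hG)
  simp [integral_indicator]

end

variable {n : ℕ} {μ : Measure (ℝ × ℝ)} {G : Set (ℝ × ℝ)}

/-- The probability that `n` points sampled from `μ` realize the pattern `π` and that, once they
are sorted by first coordinate, those in `G` are exactly the ones indexed by `S`. -/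
noncomputable def refinedPatternProb (μ : Measure (ℝ × ℝ)) (G : Set (ℝ × ℝ))
    (π : Equiv.Perm (Fin n)) (S : Finset (Fin n)) : ℝ :=
  n ! * (Measure.pi fun _ => μ).real (goodIndices G ⁻¹' {S} ∩ patternCell π)

lemma refinedPatternProb_nonneg (μ : Measure (ℝ × ℝ)) (G : Set (ℝ × ℝ))
    (π : Equiv.Perm (Fin n)) (S : Finset (Fin n)) : 0 ≤ refinedPatternProb μ G π S := by
  unfold refinedPatternProb
  positivity

lemma sum_refinedPatternProb_mul [IsFiniteMeasure μ] (hG : MeasurableSet G)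
    (π : Equiv.Perm (Fin n)) (c : Finset (Fin n) → ℝ) :
    ∑ S, refinedPatternProb μ G π S * c S =
      n ! * ∫ p in patternCell π, c (goodIndices G p) ∂(Measure.pi fun _ => μ) := by
  have hG' := measurable_goodIndices (ι := Fin n) hG
  rw [← integral_map hG'.aemeasurable (by fun_prop), integral_fintype .of_finite,
    Finset.mul_sum]
  refine Finset.sum_congr rfl fun S _ => ?_
  rw [map_measureReal_apply hG' (measurableSet_singleton S),
    measureReal_restrict_apply (hG' (measurableSet_singleton S)), refinedPatternProb, smul_eq_mul,
    mul_assoc]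

lemma IsPrePermuton.sum_refinedPatternProb (hμ : IsPrePermuton μ) (hG : MeasurableSet G)
    (π : Equiv.Perm (Fin n)) : ∑ S, refinedPatternProb μ G π S = patternProb μ π := by
  have := hμ.1
  simpa [hμ.patternProb_eq] using sum_refinedPatternProb_mul (μ := μ) hG π 1

lemma IsPrePermuton.sum_sum_refinedPatternProb_mul_card (hμ : IsPrePermuton μ)
    (hG : MeasurableSet G) (n : ℕ) :
    ∑ π : Equiv.Perm (Fin n), ∑ S, refinedPatternProb μ G π S * S.card = n * μ.real G := by
  have := hμ.1
  have integrable_card : Integrable (fun p : Fin n → ℝ × ℝ => ((goodIndices G p).card : ℝ))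
      (Measure.pi fun _ => μ) :=
    (Integrable.of_finite (f := fun S : Finset (Fin n) => (S.card : ℝ))).comp_measurable
      (measurable_goodIndices hG)
  simp only [sum_refinedPatternProb_mul hG _ fun S => (S.card : ℝ)]
  rw [hμ.sum_setIntegral_patternCell integrable_card
    fun σ p => by rw [card_goodIndices_comp], integral_card_goodIndices μ hG, Fintype.card_fin]

lemma pi_goodIndices_preimage_inter_le [IsProbabilityMeasure μ] {M : ℝ≥0}
    (h : μ.restrict G ≤ M • μ.fst.prod μ.snd) {S : Finset (Fin n)} {k : ℕ} {e : Fin k → Fin n}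
    (he : ∀ j, e j ∈ S) :
    Measure.pi (fun _ => μ) (goodIndices G ⁻¹' {S} ∩ sortedCell e) ≤
      M ^ S.card * Measure.pi (fun _ => μ.fst.prod μ.snd) (sortedCell e) := by
  let f (i : Fin n) (q : ℝ × ℝ) : ℝ × ℝ := if i ∈ S then q else (q.1, 0)
  have hf (i) : Measurable (f i) := by dsimp only [f]; split_ifs <;> fun_prop
  have preimage_eq : (fun p i => f i (p i)) ⁻¹' sortedCell e = sortedCell e := by
    have fst_f (i q) : (f i q).1 = q.1 := by dsimp only [f]; split_ifs <;> rfl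
    have snd_f (j q) : (f (e j) q).2 = q.2 := by simp [f, he]
    ext p
    simp only [sortedCell, Set.mem_preimage, Set.mem_ofPred_eq, fst_f, snd_f]
  have map_le (i) : (μ.restrict (if i ∈ S then G else Gᶜ)).map (f i) ≤
      (if i ∈ S then M else 1) • (μ.fst.prod μ.snd).map (f i) := by
    by_cases hi : i ∈ S
    · simpa [f, hi] using h
    · simpa [f, hi] using map_comp_fst_restrict_le μ Gᶜ (measurable_id.prodMk measurable_const)
  calc Measure.pi (fun _ => μ) (goodIndices G ⁻¹' {S} ∩ sortedCell e)
      = Measure.pi (fun i => μ.restrict (if i ∈ S then G else Gᶜ)) (sortedCell e) := by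
        rw [goodIndices_preimage_singleton, ← Measure.restrict_pi_pi,
          Measure.restrict_apply (measurableSet_sortedCell e), Set.inter_comm]
    _ ≤ (∏ i, ((if i ∈ S then M else 1 : ℝ≥0) : ℝ≥0∞)) *
          Measure.pi (fun _ => μ.fst.prod μ.snd) (sortedCell e) := by
        simpa only [preimage_eq] using pi_preimage_le_prod_mul_pi_preimage hf map_le
          (measurableSet_sortedCell e)
    _ = M ^ S.card * Measure.pi (fun _ => μ.fst.prod μ.snd) (sortedCell e) := by
        simp [apply_ite, Finset.prod_ite_mem]

lemma refinedPatternProb_mul_factorial_le [IsProbabilityMeasure μ] {M : ℝ≥0}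
    (h : μ.restrict G ≤ M • μ.fst.prod μ.snd) (π : Equiv.Perm (Fin n)) (S : Finset (Fin n)) :
    refinedPatternProb μ G π S * S.card ! ≤ (M : ℝ) ^ S.card := by
  let o := (S.map π.toEmbedding).orderEmbOfFin (Finset.card_map _)
  let e : Fin S.card ↪ Fin n := o.toEmbedding.trans π.symm.toEmbedding
  have he (j) : e j ∈ S :=
    Finset.mem_map_equiv.1 ((S.map π.toEmbedding).orderEmbOfFin_mem (Finset.card_map _) j)
  have patternCell_subset : patternCell π ⊆ sortedCell e := fun p hp =>
    ⟨hp.1, hp.2.comp o.strictMono⟩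
  have ennreal_le : n ! * Measure.pi (fun _ => μ) (goodIndices G ⁻¹' {S} ∩ patternCell π) *
      S.card ! ≤ (M : ℝ≥0∞) ^ S.card :=
    calc _ ≤ (n ! : ℝ≥0∞) * (M ^ S.card * Measure.pi (fun _ => μ.fst.prod μ.snd) (sortedCell e)) *
          S.card ! := by
          gcongr
          exact (measure_mono (Set.inter_subset_inter_right _ patternCell_subset)).trans
            (pi_goodIndices_preimage_inter_le h he)
      _ = M ^ S.card *
          (n ! * Measure.pi (fun _ => μ.fst.prod μ.snd) (sortedCell e) * S.card !) := by ring
      _ ≤ M ^ S.card * 1 := by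
          gcongr
          exact factorial_mul_pi_prod_sortedCell_mul_factorial_le_one μ.fst μ.snd e
      _ = M ^ S.card := mul_one _
  simpa [refinedPatternProb, measureReal_def] using ENNReal.toReal_mono (by finiteness) ennreal_le

end GoodIndices

section SamplingEntropy

variable {μ : Measure (ℝ × ℝ)} {G : Set (ℝ × ℝ)} {M : ℝ≥0}

lemma IsPrePermuton.sum_refinedPatternProb_mul_card_mul_log_le (hμ : IsPrePermuton μ)
    (hG : MeasurableSet G) (hM : 0 < M) (h : μ.restrict G ≤ M • μ.fst.prod μ.snd) {n : ℕ}
    (hn : n ≠ 0) (π : Equiv.Perm (Fin n)) :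
    ∑ S, refinedPatternProb μ G π S * (S.card * Real.log (n / M)) ≤
      Real.negMulLog (patternProb μ π) + patternProb μ π * (n * (1 + Real.log 2)) := by
  have := hμ.1
  have exp_eq (k : ℕ) : Real.exp (k * Real.log (n / M)) = ((n : ℝ) / M) ^ k := by
    rw [Real.exp_nat_mul, Real.exp_log (by positivity)]
  have sum_exp_le : ∑ S, refinedPatternProb μ G π S * Real.exp (S.card * Real.log (n / M)) ≤
      2 ^ n * Real.exp n := by
    calc _ ≤ ∑ _ : Finset (Fin n), Real.exp n := by
          gcongr with S
          rw [exp_eq]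
          exact mul_div_pow_le_exp n.cast_nonneg (by exact_mod_cast hM)
            (refinedPatternProb_nonneg μ G π S) (refinedPatternProb_mul_factorial_le h π S)
      _ = 2 ^ n * Real.exp n := by simp
  have log_eq : Real.log (2 ^ n * Real.exp n) = n * (1 + Real.log 2) := by
    rw [Real.log_mul (by positivity) (by positivity), Real.log_pow, Real.log_exp]
    ring
  have jensen := sum_mul_le_negMulLog_sum_add
    (fun S _ => refinedPatternProb_nonneg μ G π S) sum_exp_le
  rwa [hμ.sum_refinedPatternProb hG, log_eq] at jensen

lemma IsPrePermuton.le_samplingEntropy (hμ : IsPrePermuton μ) (hG : MeasurableSet G) (hM : 0 < M)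
    (h : μ.restrict G ≤ M • μ.fst.prod μ.snd) {n : ℕ} (hn : n ≠ 0) :
    n * μ.real G * Real.log (n / M) - n * (1 + Real.log 2) ≤ samplingEntropy μ n := by
  have sum_le := Finset.sum_le_sum fun π (_ : π ∈ (Finset.univ : Finset (Equiv.Perm (Fin n)))) =>
    hμ.sum_refinedPatternProb_mul_card_mul_log_le hG hM h hn π
  simp only [← mul_assoc, ← Finset.sum_mul, Finset.sum_add_distrib,
    hμ.sum_sum_refinedPatternProb_mul_card hG, hμ.sum_patternProb, one_mul] at sum_le
  exact sub_le_iff_le_add.2 sum_le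

lemma IsPrePermuton.eventually_lt_samplingEntropy_div (hμ : IsPrePermuton μ)
    (hac : μ ≪ μ.fst.prod μ.snd) {b : ℝ} (hb : b < 1) :
    ∀ᶠ n : ℕ in atTop, b < samplingEntropy μ n / (n * Real.log n) := by
  have := hμ.1
  obtain ⟨G, M, hG, hM, b_lt, h⟩ := exists_restrict_le_smul_of_absolutelyContinuous hac
    (b := ENNReal.ofReal b) (by simpa using hb)
  have b_lt_real : b < μ.real G :=
    (ENNReal.ofReal_lt_ofReal_iff'.1 (by rwa [ofReal_measureReal])).1
  have tendsto_gap : Tendsto (fun n : ℕ => (μ.real G - b) * Real.log n) atTop atTop :=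
    (Real.tendsto_log_atTop.comp tendsto_natCast_atTop_atTop).const_mul_atTop (sub_pos.2 b_lt_real)
  filter_upwards [tendsto_gap.eventually_gt_atTop (μ.real G * Real.log M + (1 + Real.log 2)),
    eventually_gt_atTop 1] with n gap_gt hn
  have n_pos : (0 : ℝ) < n := by positivity
  rw [lt_div_iff₀ (mul_pos n_pos (Real.log_pos (by exact_mod_cast hn)))]
  calc b * (n * Real.log n) < n * (μ.real G * (Real.log n - Real.log M) - (1 + Real.log 2)) := by
        nlinarith
    _ = n * μ.real G * Real.log (n / M) - n * (1 + Real.log 2) := by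
        rw [Real.log_div n_pos.ne' (by positivity)]
        ring
    _ ≤ samplingEntropy μ n := hμ.le_samplingEntropy hG hM h (by lia)

end SamplingEntropy

lemma IsPermuton.isPrePermuton {μ : Measure (ℝ × ℝ)} (hμ : IsPermuton μ) : IsPrePermuton μ := by
  obtain ⟨-, hfst, hsnd⟩ := hμ
  have measure_univ : μ Set.univ = 1 := by
    rw [← Measure.fst_univ, Measure.fst, hfst]
    simp
  exact ⟨⟨measure_univ⟩, fun x => by simp [hfst], fun y => by simp [hsnd]⟩

lemma IsPermuton.absolutelyContinuous_prod {μ : Measure (ℝ × ℝ)} (hμ : IsPermuton μ)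
    (hac : μ ≪ volume) : μ ≪ μ.fst.prod μ.snd := by
  have restrict_eq : μ.restrict (Set.Icc 0 1 ×ˢ Set.Icc 0 1) = μ :=
    Measure.restrict_eq_self_of_ae_mem hμ.1
  rw [Measure.fst, Measure.snd, hμ.2.1, hμ.2.2, Measure.prod_restrict, ← Measure.volume_eq_prod]
  exact restrict_eq ▸ hac.restrict _

theorem absolutelyContinuous_samplingEntropy_superlinear_general (μ : Measure (ℝ × ℝ))
    (hμ : IsPrePermuton μ) (hac : μ ≪ μ.fst.prod μ.snd) :
    Tendsto (fun n : ℕ => samplingEntropy μ n / (n * Real.log n)) atTop (nhds 1) := by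
  refine tendsto_order.2 ⟨fun b hb => hμ.eventually_lt_samplingEntropy_div hac hb,
    fun b hb => .of_forall fun n => lt_of_le_of_lt ?_ hb⟩
  exact div_le_one_of_le₀ (hμ.samplingEntropy_le n) (by positivity)

/-- If a permuton μ is absolutely continuous with respect to two-dimensional Lebesgue
measure, then H_n(μ)/(n log n) → 1. -/
theorem absolutelyContinuous_samplingEntropy_superlinear
    (μ : Measure (ℝ × ℝ)) (hμ : IsPermuton μ)
    (hac : μ ≪ (volume : Measure (ℝ × ℝ))) :
    Tendsto (fun n : ℕ => samplingEntropy μ n / (n * Real.log n)) atTop (nhds 1) :=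
  absolutelyContinuous_samplingEntropy_superlinear_general μ hμ.isPrePermuton
    (hμ.absolutelyContinuous_prod hac)
end

section
/- Let f : [0,1] → [0,1] be a Borel map preserving Lebesgue measure, and suppose there exist finitely many points 0 = x_0 < x_1 < … < x_k = 1 such that f is continuously differentiable on each open interval (x_{i−1}, x_i). Then lim_{n→∞} H_n(μ_f)/n = ∫₀¹ log|f'(x)| dx. (Since f preserves Lebesgue measure, |f'| ≥ 1 almost everywhere, so the integrand is nonnegative and the integral is well defined in [0, +∞]; if the integral is +∞, the conclusion is that H_n(μ_f)/n → +∞.) -/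
open MeasureTheory Filter

/-- The permuton associated with a Lebesgue-measure-preserving map f : [0,1] → [0,1]:
the pushforward of Lebesgue measure on [0,1] under x ↦ (x, f x). -/
noncomputable def graphPermuton (f : ℝ → ℝ) : Measure (ℝ × ℝ) :=
  Measure.map (fun t => (t, f t)) (volume.restrict (Set.Icc (0:ℝ) 1))

/-!
Label the points of the graph by the branch of `f` they lie on. A sample listed by increasing
abscissa visits the branches from left to right, so at most polynomially many sequences of branches
occur in that order. Since `f` is monotone on each branch, the order pattern of a sample is
therefore determined, up to subexponentially many choices, by the sequence of branches visited in
the order of increasing ordinate, and conversely. Given their ordinates, the branches are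
independent, so the entropy rate is the conditional entropy of the branch of a point given its
ordinate. Both bounds come from Gibbs' inequality, with the weights `∏ i, p (w i)` on sequences of
branches for the upper bound. As `f` preserves Lebesgue measure, the conditional probability of the
branch through `(t, f t)` is `1 / |f' t|`.
-/

namespace Permuton

open Set
open scoped ENNReal Topology

/-! ### Entropy of a finite partition -/

section Partition

lemma log_add_one_le {u c : ℝ} (hu : 0 < u) (hc : 0 < c) :
    Real.log u + 1 ≤ u / c + Real.log c := by
  have h := Real.log_le_sub_one_of_pos (div_pos hu hc)
  rw [Real.log_div hu.ne' hc.ne'] at h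
  linarith

variable {Ω ι : Type*} [MeasurableSpace Ω]

lemma integral_le_negMulLog_add {μ : Measure Ω} [IsFiniteMeasure μ] {F : Ω → ℝ} {C : ℝ}
    (hC : 0 < C) (hF : Integrable F μ) (hexp : Integrable (fun ω => Real.exp (F ω)) μ)
    (hle : ∫ ω, Real.exp (F ω) ∂μ ≤ C) :
    ∫ ω, F ω ∂μ ≤ Real.negMulLog (μ.real univ) + μ.real univ * Real.log C := by
  rcases eq_zero_or_neZero μ with rfl | hμ
  · simp
  set p := μ.real univ
  have hp : 0 < p := measureReal_univ_pos
  have hpt : ∀ ω, F ω + 1 ≤ Real.exp (F ω) / (C / p) + Real.log (C / p) := fun ω => by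
    simpa using log_add_one_le (Real.exp_pos (F ω)) (div_pos hC hp)
  have hint := integral_mono (hF.add (integrable_const 1))
    ((hexp.div_const (C / p)).add (integrable_const (Real.log (C / p)))) hpt
  rw [integral_add' hF (integrable_const 1), integral_add' (hexp.div_const _) (integrable_const _),
    integral_div, integral_const, integral_const, smul_eq_mul, smul_eq_mul, mul_one,
    Real.log_div hC.ne' hp.ne'] at hint
  have hfrac : (∫ ω, Real.exp (F ω) ∂μ) / (C / p) ≤ p := by
    rw [div_le_iff₀ (div_pos hC hp), mul_div_cancel₀ _ hp.ne']
    exact hle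
  rw [Real.negMulLog]
  linarith

lemma negMulLog_le_integral_add {μ : Measure Ω} [IsFiniteMeasure μ] {F : Ω → ℝ} {C Q : ℝ}
    (hC : 0 < C) (hQ : 0 ≤ Q) (hF : Integrable F μ) (hle : ∀ᵐ ω ∂μ, Real.exp (-F ω) ≤ Q) :
    Real.negMulLog (μ.real univ) ≤
      ∫ ω, F ω ∂μ + μ.real univ * Real.log C + Q / C - μ.real univ := by
  rcases eq_zero_or_neZero μ with rfl | hμ
  · simpa using div_nonneg hQ hC.le
  set p := μ.real univ
  have hp : 0 < p := measureReal_univ_pos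
  obtain ⟨ω₀, hω₀⟩ := hle.exists
  have hQ' : 0 < Q := (Real.exp_pos _).trans_le hω₀
  have hlogQ : p * -Real.log Q ≤ ∫ ω, F ω ∂μ := by
    have hpt : (fun _ => -Real.log Q) ≤ᵐ[μ] F := by
      filter_upwards [hle] with ω hω
      linarith [(Real.le_log_iff_exp_le hQ').2 hω]
    simpa [p] using integral_mono_ae (integrable_const _) hF hpt
  have hlog : p * (Real.log (Q / C) + 1) ≤ Q / C + p * Real.log p := by
    have h := mul_le_mul_of_nonneg_left (log_add_one_le (div_pos hQ' hC) hp) hp.le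
    rwa [mul_add p (Q / C / p), mul_div_cancel₀ _ hp.ne'] at h
  rw [Real.log_div hQ'.ne' hC.ne'] at hlog
  rw [Real.negMulLog]
  linarith

variable {P : Measure Ω} {A : ι → Set Ω}

/-- A family of measurable sets that covers almost every point exactly once. -/
structure IsAEPartition (P : Measure Ω) (A : ι → Set Ω) : Prop where
  measurableSet : ∀ i, MeasurableSet (A i)
  ae_existsUnique : ∀ᵐ ω ∂P, ∃! i, ω ∈ A i

variable [Fintype ι]

lemma IsAEPartition.sum_setIntegral (hA : IsAEPartition P A) {F : Ω → ℝ} (hF : Integrable F P) :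
    ∑ i, ∫ ω in A i, F ω ∂P = ∫ ω, F ω ∂P := by
  simp_rw [← integral_indicator (hA.measurableSet _)]
  rw [← integral_finsetSum _ fun i _ => hF.indicator (hA.measurableSet i)]
  refine integral_congr_ae ?_
  filter_upwards [hA.ae_existsUnique] with ω ⟨i, hi, huniq⟩
  rw [Finset.sum_eq_single i (fun j _ hj => indicator_of_notMem (fun h => hj (huniq j h)) F)
    (by simp), indicator_of_mem hi]

lemma IsAEPartition.sum_measureReal [IsProbabilityMeasure P] (hA : IsAEPartition P A) :
    ∑ i, P.real (A i) = 1 := by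
  simpa using hA.sum_setIntegral (integrable_const (1 : ℝ))

/-- The Shannon entropy, in nats, of a finite partition of a probability space. -/
noncomputable def partitionEntropy (P : Measure Ω) (A : ι → Set Ω) : ℝ :=
  ∑ i, Real.negMulLog (P.real (A i))

variable [IsProbabilityMeasure P] {F : Ω → ℝ} {C : ℝ}

lemma IsAEPartition.integral_le_partitionEntropy_add_log (hA : IsAEPartition P A) (hC : 0 < C)
    (hF : Integrable F P) (hexp : Integrable (fun ω => Real.exp (F ω)) P)
    (hle : ∀ i, ∫ ω in A i, Real.exp (F ω) ∂P ≤ C) :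
    ∫ ω, F ω ∂P ≤ partitionEntropy P A + Real.log C := by
  have hi (i : ι) : ∫ ω in A i, F ω ∂P ≤
      Real.negMulLog (P.real (A i)) + P.real (A i) * Real.log C := by
    simpa using integral_le_negMulLog_add hC hF.restrict hexp.restrict (hle i)
  calc ∫ ω, F ω ∂P = ∑ i, ∫ ω in A i, F ω ∂P := (hA.sum_setIntegral hF).symm
    _ ≤ ∑ i, (Real.negMulLog (P.real (A i)) + P.real (A i) * Real.log C) :=
      Finset.sum_le_sum fun i _ => hi i
    _ = partitionEntropy P A + Real.log C := by
      rw [Finset.sum_add_distrib, ← Finset.sum_mul, hA.sum_measureReal, one_mul, partitionEntropy]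

lemma IsAEPartition.partitionEntropy_le_integral_add_log (hA : IsAEPartition P A) (hC : 0 < C)
    (hF : Integrable F P) {Q : ι → ℝ} (hQ : ∀ i, 0 ≤ Q i) (hsum : ∑ i, Q i ≤ C)
    (hle : ∀ᵐ ω ∂P, ∀ i, ω ∈ A i → Real.exp (-F ω) ≤ Q i) :
    partitionEntropy P A ≤ ∫ ω, F ω ∂P + Real.log C := by
  have hi (i : ι) : Real.negMulLog (P.real (A i)) ≤
      ∫ ω in A i, F ω ∂P + P.real (A i) * Real.log C + Q i / C - P.real (A i) := by
    have hle_i : ∀ᵐ ω ∂P.restrict (A i), Real.exp (-F ω) ≤ Q i :=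
      (ae_restrict_iff' (hA.measurableSet i)).2 (hle.mono fun ω h => h i)
    simpa using negMulLog_le_integral_add hC (hQ i) hF.restrict hle_i
  calc partitionEntropy P A
      ≤ ∑ i, (∫ ω in A i, F ω ∂P + P.real (A i) * Real.log C + Q i / C - P.real (A i)) :=
        Finset.sum_le_sum fun i _ => hi i
    _ = ∫ ω, F ω ∂P + Real.log C + (∑ i, Q i) / C - 1 := by
        rw [Finset.sum_sub_distrib, Finset.sum_add_distrib, Finset.sum_add_distrib,
          hA.sum_setIntegral hF, ← Finset.sum_mul, ← Finset.sum_div, hA.sum_measureReal, one_mul]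
    _ ≤ ∫ ω, F ω ∂P + Real.log C := by
        have : (∑ i, Q i) / C ≤ 1 := (div_le_one hC).2 hsum
        linarith

end Partition

/-! ### Sorted samples and order patterns -/

section SortedSample

variable {α : Type*} {n : ℕ}

lemma eq_of_strictMono_comp_perm {β : Type*} [LinearOrder β] {x : Fin n → β}
    {σ τ : Equiv.Perm (Fin n)}
    (hσ : StrictMono (x ∘ σ)) (hτ : StrictMono (x ∘ τ)) : σ = τ := by
  have hx : Function.Injective x := (Equiv.injective_comp σ x).1 hσ.injective
  exact Equiv.ext fun i => hx (congrFun (Tuple.unique_monotone hσ.monotone hτ.monotone) i)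

lemma strictMono_comp_sort {β : Type*} [LinearOrder β] {x : Fin n → β}
    (hx : Function.Injective x) :
    StrictMono (x ∘ Tuple.sort x) :=
  (Tuple.monotone_sort x).strictMono_of_injective (hx.comp (Equiv.injective _))

lemma preimage_comp_sort (X : α → ℝ) (s : Set (Fin n → α)) :
    (fun p => p ∘ Tuple.sort (X ∘ p)) ⁻¹' s =
      ⋃ σ : Equiv.Perm (Fin n), {p | Tuple.sort (X ∘ p) = σ} ∩ (fun p => p ∘ σ) ⁻¹' s := by
  ext p
  simp

variable [MeasurableSpace α] {μ : Measure α} {X : α → ℝ}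

lemma measurePreserving_comp_perm (μ : Measure α) [SigmaFinite μ] (σ : Equiv.Perm (Fin n)) :
    MeasurePreserving (fun p : Fin n → α => p ∘ σ) (Measure.pi fun _ => μ)
      (Measure.pi fun _ => μ) := by
  convert measurePreserving_piCongrLeft (fun _ : Fin n => μ) σ.symm using 1
  ext p i
  simp [MeasurableEquiv.piCongrLeft, Equiv.piCongrLeft, Equiv.piCongrLeft']

lemma measurableSet_setOf_strictMono_comp (hX : Measurable X) :
    MeasurableSet {p : Fin n → α | StrictMono (X ∘ p)} := by
  simp only [StrictMono, ofPred_forall]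
  exact .iInter fun i => .iInter fun j => .iInter fun _ =>
    measurableSet_lt (by fun_prop) (by fun_prop)

lemma measurableSet_setOf_sort_eq (hX : Measurable X) (σ : Equiv.Perm (Fin n)) :
    MeasurableSet {p : Fin n → α | Tuple.sort (X ∘ p) = σ} := by
  simp only [eq_comm (b := σ), Tuple.eq_sort_iff, Monotone, ofPred_and, ofPred_forall]
  have hXi (i : Fin n) : Measurable fun p : Fin n → α => X (p i) := by fun_prop
  exact .inter (.iInter fun i => .iInter fun j => .iInter fun _ => measurableSet_le (hXi _) (hXi _))
    (.iInter fun i => .iInter fun j => .iInter fun _ =>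
      .imp (measurableSet_eq_fun (hXi _) (hXi _)) (.const _))

lemma measurable_comp_sort (hX : Measurable X) :
    Measurable fun p : Fin n → α => p ∘ Tuple.sort (X ∘ p) := fun s hs => by
  rw [preimage_comp_sort]
  exact .iUnion fun σ => (measurableSet_setOf_sort_eq hX σ).inter
    (measurable_pi_lambda (fun p : Fin n → α => p ∘ σ) (fun i => measurable_pi_apply (σ i)) hs)

/-- The law of `n` independent samples from `μ`, listed by increasing value of `X`. -/
noncomputable def sortedSample (μ : Measure α) (X : α → ℝ) (n : ℕ) : Measure (Fin n → α) :=
  (Measure.pi fun _ => μ).map fun p => p ∘ Tuple.sort (X ∘ p)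

lemma integrable_sortedSample_of_symm (hX : Measurable X) {F : (Fin n → α) → ℝ} (hF : Measurable F)
    (hsymm : ∀ (σ : Equiv.Perm (Fin n)) p, F (p ∘ σ) = F p)
    (hint : Integrable F (Measure.pi fun _ => μ)) : Integrable F (sortedSample μ X n) := by
  rw [sortedSample, integrable_map_measure hF.aestronglyMeasurable
    (measurable_comp_sort hX).aemeasurable]
  exact hint.congr (.of_forall fun p => (hsymm _ p).symm)

lemma integral_sortedSample_of_symm (hX : Measurable X) {F : (Fin n → α) → ℝ} (hF : Measurable F)
    (hsymm : ∀ (σ : Equiv.Perm (Fin n)) p, F (p ∘ σ) = F p) :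
    ∫ p, F p ∂sortedSample μ X n = ∫ p, F p ∂Measure.pi fun _ => μ := by
  rw [sortedSample, integral_map (measurable_comp_sort hX).aemeasurable hF.aestronglyMeasurable]
  exact integral_congr_ae (.of_forall fun p => hsymm _ p)

lemma ae_pi_ne {ι : Type*} [Fintype ι] [MeasurableEq α] (μ : Measure α) [IsProbabilityMeasure μ]
    [NullSingletonClass μ] {i j : ι} (hij : i ≠ j) :
    ∀ᵐ p ∂Measure.pi fun _ : ι => μ, p i ≠ p j := by
  have hmap (l : ι) : (Measure.pi fun _ : ι => μ).map (fun p => p l) = μ :=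
    (measurePreserving_eval (fun _ : ι => μ) l).map_eq
  have hindep := (ProbabilityTheory.iIndepFun_pi (μ := fun _ : ι => μ) (X := fun _ => id)
    fun _ => aemeasurable_id).indepFun hij
  have hprod := (ProbabilityTheory.indepFun_iff_map_prod_eq_prod_map_map
    (measurable_pi_apply i).aemeasurable (measurable_pi_apply j).aemeasurable).1 hindep
  simp only [hmap] at hprod
  have hdiag : ∀ᵐ q ∂μ.prod μ, q.1 ≠ q.2 := by
    simp only [ae_iff, not_not]
    rw [Measure.measure_prod_null (measurableSet_eq_fun measurable_fst measurable_snd)]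
    exact .of_forall fun a => by simp [preimage]
  rw [← hprod] at hdiag
  exact ae_of_ae_map (f := fun p : ι → α => (p i, p j)) (by fun_prop) hdiag

variable [IsProbabilityMeasure μ]

lemma isProbabilityMeasure_sortedSample (hX : Measurable X) :
    IsProbabilityMeasure (sortedSample μ X n) :=
  Measure.isProbabilityMeasure_map (measurable_comp_sort hX).aemeasurable

variable {φ : α → ℝ}

lemma integrable_sortedSample_sum (hX : Measurable X) (hφm : Measurable φ) (hφ : Integrable φ μ) :
    Integrable (fun p => ∑ i, φ (p i)) (sortedSample μ X n) :=
  integrable_sortedSample_of_symm hX (by fun_prop)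
    (fun σ p => Equiv.sum_comp σ fun i => φ (p i)) <|
    integrable_finsetSum _ fun i _ => integrable_comp_eval hφ

lemma integrable_sortedSample_exp_sum (hX : Measurable X) (hφm : Measurable φ)
    (hφ : Integrable (fun a => Real.exp (φ a)) μ) :
    Integrable (fun p => Real.exp (∑ i, φ (p i))) (sortedSample μ X n) :=
  integrable_sortedSample_of_symm hX (by fun_prop)
    (fun σ p => congrArg Real.exp (Equiv.sum_comp σ fun i => φ (p i))) <| by
      simpa only [Real.exp_sum] using Integrable.fintype_prod fun _ => hφ

lemma integral_sortedSample_sum (hX : Measurable X) (hφm : Measurable φ) (hφ : Integrable φ μ) :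
    ∫ p, ∑ i, φ (p i) ∂sortedSample μ X n = n * ∫ a, φ a ∂μ := by
  rw [integral_sortedSample_of_symm hX (by fun_prop)
      fun σ p => Equiv.sum_comp σ fun i => φ (p i),
    integral_finsetSum _ fun i _ => integrable_comp_eval hφ]
  simp [integral_comp_eval (μ := fun _ : Fin n => μ) hφ.aestronglyMeasurable]

variable [NullSingletonClass (μ.map X)]

lemma ae_pi_injective_comp (hX : Measurable X) :
    ∀ᵐ p ∂Measure.pi fun _ : Fin n => μ, Function.Injective (X ∘ p) := by
  have := Measure.isProbabilityMeasure_map (μ := μ) hX.aemeasurable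
  have hinj : ∀ᵐ x ∂Measure.pi fun _ : Fin n => μ.map X, Function.Injective x := by
    have hne : ∀ᵐ x ∂Measure.pi fun _ : Fin n => μ.map X, ∀ i j, i ≠ j → x i ≠ x j :=
      ae_all_iff.2 fun i => ae_all_iff.2 fun j => eventually_imp_distrib_left.2 (ae_pi_ne _)
    exact hne.mono fun x hx => Function.injective_iff_pairwise_ne.2 hx
  rw [← Measure.pi_map_pi fun _ => hX.aemeasurable] at hinj
  exact ae_of_ae_map (f := fun (p : Fin n → α) i => X (p i))
    (measurable_pi_lambda _ fun i => hX.comp (measurable_pi_apply i)).aemeasurable hinj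

lemma sort_eq_inter_ae_eq (hX : Measurable X) (σ : Equiv.Perm (Fin n)) (s : Set (Fin n → α)) :
    ({p | Tuple.sort (X ∘ p) = σ} ∩ (fun p => p ∘ σ) ⁻¹' s : Set (Fin n → α))
      =ᵐ[Measure.pi fun _ => μ] (fun p => p ∘ σ) ⁻¹' ({p | StrictMono (X ∘ p)} ∩ s) := by
  filter_upwards [ae_pi_injective_comp (n := n) (μ := μ) hX] with p hp
  have : Tuple.sort (X ∘ p) = σ ↔ StrictMono (X ∘ p ∘ σ) :=
    ⟨fun h => h ▸ strictMono_comp_sort hp,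
      fun h => eq_of_strictMono_comp_perm (strictMono_comp_sort hp) h⟩
  exact propext (and_congr_left' this)

lemma sortedSample_eq_factorial_smul_restrict (hX : Measurable X) :
    sortedSample μ X n = (n.factorial : ℝ≥0∞) •
      (Measure.pi fun _ => μ).restrict {p | StrictMono (X ∘ p)} := by
  ext s hs
  have hmeas (σ : Equiv.Perm (Fin n)) : (Measure.pi fun _ => μ)
      ({p | Tuple.sort (X ∘ p) = σ} ∩ (fun p => p ∘ σ) ⁻¹' s) =
        (Measure.pi fun _ => μ) ({p | StrictMono (X ∘ p)} ∩ s) := by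
    rw [measure_congr (sort_eq_inter_ae_eq hX σ s)]
    exact (measurePreserving_comp_perm μ σ).measure_preimage
      ((measurableSet_setOf_strictMono_comp hX).inter hs).nullMeasurableSet
  have hdisj : Pairwise fun σ τ : Equiv.Perm (Fin n) => Disjoint
      ({p | Tuple.sort (X ∘ p) = σ} ∩ (fun p : Fin n → α => p ∘ σ) ⁻¹' s)
      ({p | Tuple.sort (X ∘ p) = τ} ∩ (fun p : Fin n → α => p ∘ τ) ⁻¹' s) := fun σ τ hne =>
    disjoint_left.2 fun p hσ hτ => hne (hσ.1.symm.trans hτ.1)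
  rw [sortedSample, Measure.map_apply (measurable_comp_sort hX) hs, preimage_comp_sort,
    measure_iUnion hdisj fun σ => (measurableSet_setOf_sort_eq hX σ).inter
      ((measurePreserving_comp_perm μ σ).measurable hs)]
  simp [hmeas, Measure.restrict_apply hs, inter_comm, Fintype.card_perm]

lemma ae_sortedSample_strictMono (hX : Measurable X) :
    ∀ᵐ p ∂sortedSample μ X n, StrictMono (X ∘ p) := by
  rw [sortedSample_eq_factorial_smul_restrict hX]
  exact Measure.ae_smul_measure (ae_restrict_mem (measurableSet_setOf_strictMono_comp hX)) _

lemma sortedSample_absolutelyContinuous (hX : Measurable X) :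
    sortedSample μ X n ≪ Measure.pi fun _ => μ := by
  rw [sortedSample_eq_factorial_smul_restrict hX]
  exact Measure.restrict_le_self.absolutelyContinuous.smul_left _

lemma ae_sortedSample_of_ae (hX : Measurable X) {s : α → Prop} (h : ∀ᵐ a ∂μ, s a) :
    ∀ᵐ p ∂sortedSample μ X n, ∀ i, s (p i) :=
  (sortedSample_absolutelyContinuous hX).ae_le <| ae_all_iff.2 fun i =>
    (measurePreserving_eval (fun _ : Fin n => μ) i).quasiMeasurePreserving.ae h

end SortedSample

section Pattern

variable {n : ℕ}

/-- The tuples whose order pattern is `π`. -/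
def patternSet (π : Equiv.Perm (Fin n)) : Set (Fin n → ℝ) :=
  {y | ∀ i j : Fin n, i < j → (y i < y j ↔ π i < π j)}

lemma measurableSet_patternSet (π : Equiv.Perm (Fin n)) : MeasurableSet (patternSet π) := by
  simp only [patternSet, ofPred_forall]
  exact .iInter fun i => .iInter fun j => .iInter fun _ =>
    .iff (measurableSet_lt (measurable_pi_apply i) (measurable_pi_apply j)) (.const _)

lemma mem_patternSet_iff {π : Equiv.Perm (Fin n)} {y : Fin n → ℝ} (hy : Function.Injective y) :
    y ∈ patternSet π ↔ StrictMono (y ∘ π.symm) := by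
  constructor
  · intro h i j hij
    rcases lt_or_gt_of_ne (π.symm.injective.ne hij.ne) with hlt | hgt
    · exact (h _ _ hlt).2 (by simpa using hij)
    · have hle : ¬ y (π.symm j) < y (π.symm i) := (not_congr (h _ _ hgt)).2 (by simpa using hij.le)
      exact (not_lt.1 hle).lt_of_ne fun he => hij.ne (π.symm.injective (hy he))
  · intro h i j _
    simpa using h.lt_iff_lt (a := π i) (b := π j)

lemma existsUnique_mem_patternSet {y : Fin n → ℝ} (hy : Function.Injective y) :
    ∃! π : Equiv.Perm (Fin n), y ∈ patternSet π := by
  refine ⟨(Tuple.sort y).symm, (mem_patternSet_iff hy).2 (strictMono_comp_sort hy), fun π hπ => ?_⟩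
  exact Equiv.symm_bijective.injective <|
    eq_of_strictMono_comp_perm ((mem_patternSet_iff hy).1 hπ) (strictMono_comp_sort hy)

lemma factorial_mul_pi_patternSet (ν : Measure ℝ) [IsProbabilityMeasure ν] [NullSingletonClass ν]
    (π : Equiv.Perm (Fin n)) : n.factorial * (Measure.pi fun _ => ν) (patternSet π) = 1 := by
  have : NullSingletonClass (ν.map id) := by rwa [Measure.map_id]
  have : IsProbabilityMeasure (sortedSample ν id n) :=
    isProbabilityMeasure_sortedSample measurable_id
  have hpat : patternSet π =ᵐ[Measure.pi fun _ => ν]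
      (fun y => y ∘ π.symm) ⁻¹' {y | StrictMono y} := by
    filter_upwards [ae_pi_injective_comp (n := n) (μ := ν) measurable_id] with y hy
    exact propext (mem_patternSet_iff hy)
  have huniv : sortedSample ν id n univ = 1 := measure_univ
  rw [sortedSample_eq_factorial_smul_restrict measurable_id] at huniv
  have hpre := (measurePreserving_comp_perm ν π.symm).measure_preimage
    (measurableSet_setOf_strictMono_comp measurable_id).nullMeasurableSet
  simp only [Function.id_comp] at hpre
  rw [measure_congr hpat, hpre]
  simpa using huniv

lemma measurableSet_preimage_patternSet (π : Equiv.Perm (Fin n)) :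
    MeasurableSet {p : Fin n → ℝ × ℝ | Prod.snd ∘ p ∈ patternSet π} :=
  measurableSet_preimage (f := fun (p : Fin n → ℝ × ℝ) i => (p i).2) (by fun_prop)
    (measurableSet_patternSet π)

variable {m : Measure (ℝ × ℝ)} [IsProbabilityMeasure m] [NullSingletonClass (m.map Prod.fst)]

lemma patternProb_eq_sortedSample (π : Equiv.Perm (Fin n)) : patternProb m π =
    (sortedSample m Prod.fst n).real {p | Prod.snd ∘ p ∈ patternSet π} := by
  rw [sortedSample_eq_factorial_smul_restrict measurable_fst, measureReal_ennreal_smul_apply,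
    measureReal_restrict_apply (measurableSet_preimage_patternSet π), ENNReal.toReal_natCast,
    patternProb, measureReal_def]
  congr 3
  ext p
  simp only [patternSet, StrictMono, mem_ofPred_eq, mem_inter_iff, Function.comp_apply]
  grind

lemma samplingEntropy_eq_partitionEntropy : samplingEntropy m n =
    partitionEntropy (sortedSample m Prod.fst n)
      fun π : Equiv.Perm (Fin n) => {p | Prod.snd ∘ p ∈ patternSet π} := by
  simp_rw [samplingEntropy, patternProb_eq_sortedSample, partitionEntropy]

variable [NullSingletonClass (m.map Prod.snd)]

lemma isAEPartition_patternSet : IsAEPartition (sortedSample m Prod.fst n)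
    fun π : Equiv.Perm (Fin n) => {p | Prod.snd ∘ p ∈ patternSet π} where
  measurableSet := measurableSet_preimage_patternSet
  ae_existsUnique := by
    filter_upwards [(sortedSample_absolutelyContinuous measurable_fst).ae_le
      (ae_pi_injective_comp (μ := m) measurable_snd)] with p hp
    exact existsUnique_mem_patternSet hp

end Pattern

lemma card_monotone_le (n k : ℕ) :
    (Finset.univ.filter fun c : Fin n → Fin k => Monotone c).card ≤ (n + 1) ^ k := by
  classical
  have hcard (c : Fin n → Fin k) (j : Fin k) : (Finset.univ.filter fun i => c i ≤ j).card < n + 1 :=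
    Nat.lt_succ_of_le <| (Finset.card_le_univ _).trans_eq (Fintype.card_fin n)
  have hinj : Set.InjOn (fun (c : Fin n → Fin k) j => (⟨_, hcard c j⟩ : Fin (n + 1)))
      {c | Monotone c} := by
    intro c hc d hd hcd
    have hiff (i : Fin n) (j : Fin k) : c i ≤ j ↔ d i ≤ j := by
      rw [← Tuple.lt_card_le_iff_apply_le_of_monotone hc,
        ← Tuple.lt_card_le_iff_apply_le_of_monotone hd]
      exact iff_of_eq (congrArg (i.val < ·) (Fin.ext_iff.1 (congrFun hcd j)))
    exact funext fun i => le_antisymm ((hiff i _).2 le_rfl) ((hiff i _).1 le_rfl)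
  calc _ ≤ (Finset.univ : Finset (Fin k → Fin (n + 1))).card :=
        Finset.card_le_card_of_injOn _ (by simp) (by simpa using hinj)
    _ = (n + 1) ^ k := by simp

section ProductMeasure

variable {ι : Type*} [Fintype ι] {α : ι → Type*} [∀ i, MeasurableSpace (α i)]

lemma pi_mono {μ ν : ∀ i, Measure (α i)} (hle : ∀ i, μ i ≤ ν i) : Measure.pi μ ≤ Measure.pi ν := by
  have houter : OuterMeasure.pi (fun i => (μ i).toOuterMeasure) ≤
      OuterMeasure.pi fun i => (ν i).toOuterMeasure :=
    OuterMeasure.le_pi.2 fun s _ => (OuterMeasure.pi_pi_le _ _).trans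
      (Finset.prod_le_prod' fun i _ => hle i (s i))
  refine Measure.le_iff.2 fun s hs => ?_
  rw [Measure.pi_def, Measure.pi_def, toMeasure_apply _ _ hs, toMeasure_apply _ _ hs]
  exact houter s

lemma pi_withDensity {μ : ∀ i, Measure (α i)} [∀ i, IsProbabilityMeasure (μ i)]
    {φ : ∀ i, α i → ℝ≥0∞} (hφ : ∀ i, Measurable (φ i))
    [∀ i, SigmaFinite ((μ i).withDensity (φ i))] :
    (Measure.pi fun i => (μ i).withDensity (φ i)) =
      (Measure.pi μ).withDensity fun x => ∏ i, φ i (x i) := by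
  refine Measure.pi_eq fun s hs => ?_
  have hind (x : ∀ i, α i) : (univ.pi s).indicator (fun x => ∏ i, φ i (x i)) x =
      ∏ i, (s i).indicator (φ i) (x i) := by
    classical
    simp [indicator_apply, Finset.prod_ite_zero]
  have hmeas (i : ι) : Measurable ((s i).indicator (φ i)) := (hφ i).indicator (hs i)
  have hindep := ProbabilityTheory.iIndepFun_pi (μ := μ) fun i => (hmeas i).aemeasurable
  rw [withDensity_apply _ (.univ_pi hs), ← lintegral_indicator (.univ_pi hs)]
  simp_rw [hind]
  rw [ProbabilityTheory.lintegral_prod_eq_prod_lintegral_of_indepFun Finset.univ _ hindep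
    fun i => (hmeas i).comp (measurable_pi_apply i)]
  refine Finset.prod_congr rfl fun i _ => ?_
  rw [(measurePreserving_eval μ i).lintegral_comp (hmeas i), lintegral_indicator (hs i),
    withDensity_apply _ (hs i)]

end ProductMeasure

/-! ### Branches and the lower bound -/

section Branch

variable {n k : ℕ} {c : ℝ → Fin k}

/-- Points listed by increasing abscissa visit the branches in increasing order, so there are only
polynomially many sequences of branches. -/
lemma pi_strictMono_inter_le {κ : Measure (ℝ × ℝ)} [IsFiniteMeasure κ] {ν : Measure ℝ}
    (hc : Monotone c) (hle : ∀ a, (κ.restrict {p | c p.1 = a}).map Prod.snd ≤ ν)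
    {E : Set (Fin n → ℝ)} (hE : MeasurableSet E) :
    (Measure.pi fun _ : Fin n => κ) ({p | StrictMono (Prod.fst ∘ p)} ∩ {p | Prod.snd ∘ p ∈ E}) ≤
      (n + 1) ^ k * (Measure.pi fun _ => ν) E := by
  classical
  set W := Finset.univ.filter fun w : Fin n → Fin k => Monotone w
  have hword (w : Fin n → Fin k) : (Measure.pi fun _ : Fin n => κ)
      ({p | Prod.snd ∘ p ∈ E} ∩ univ.pi fun i => {q | c q.1 = w i}) ≤
        (Measure.pi fun _ => ν) E := by
    have hsnd : Measurable fun (p : Fin n → ℝ × ℝ) i => (p i).2 := by fun_prop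
    calc _ = (Measure.pi fun i => κ.restrict {q | c q.1 = w i}) {p | Prod.snd ∘ p ∈ E} := by
          rw [← Measure.restrict_pi_pi]
          exact (Measure.restrict_apply (hsnd hE)).symm
      _ = (Measure.pi fun i => (κ.restrict {q | c q.1 = w i}).map Prod.snd) E := by
          rw [← Measure.pi_map_pi fun _ => measurable_snd.aemeasurable, Measure.map_apply hsnd hE]
          rfl
      _ ≤ (Measure.pi fun _ => ν) E := pi_mono (fun i => hle (w i)) E
  have hcover : ({p | StrictMono (Prod.fst ∘ p)} ∩ {p | Prod.snd ∘ p ∈ E} : Set (Fin n → ℝ × ℝ)) ⊆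
      ⋃ w ∈ W, {p | Prod.snd ∘ p ∈ E} ∩ univ.pi fun i => {q | c q.1 = w i} := fun p hp =>
    mem_biUnion (x := fun i => c (p i).1)
      (Finset.mem_coe.2 <| Finset.mem_filter.2 ⟨Finset.mem_univ _, hc.comp hp.1.monotone⟩)
      ⟨hp.2, fun _ _ => rfl⟩
  calc _ ≤ ∑ w ∈ W, (Measure.pi fun _ : Fin n => κ)
          ({p | Prod.snd ∘ p ∈ E} ∩ univ.pi fun i => {q | c q.1 = w i}) :=
        (measure_mono hcover).trans (measure_biUnion_finset_le _ _)
    _ ≤ ∑ w ∈ W, (Measure.pi fun _ => ν) E := Finset.sum_le_sum fun w _ => hword w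
    _ ≤ (n + 1) ^ k * (Measure.pi fun _ => ν) E := by
        rw [Finset.sum_const, nsmul_eq_mul]
        gcongr
        exact_mod_cast card_monotone_le n k

/-- The law of the ordinate on the branch `{p | c p.1 = a}`, as a submeasure of the ordinate
marginal of `m`. -/
noncomputable def branchMarginal (m : Measure (ℝ × ℝ)) (c : ℝ → Fin k) (a : Fin k) : Measure ℝ :=
  (m.restrict {p | c p.1 = a}).map Prod.snd

/-- The conditional probability of branch `a` given the ordinate. -/
noncomputable def branchDensity (m : Measure (ℝ × ℝ)) (c : ℝ → Fin k) (a : Fin k) : ℝ → ℝ≥0∞ :=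
  (branchMarginal m c a).rnDeriv (m.map Prod.snd)

/-- The information carried by the branch of a point whose ordinate is known; its integral is the
conditional entropy of the branch given the ordinate. -/
noncomputable def branchInformation (m : Measure (ℝ × ℝ)) (c : ℝ → Fin k) (p : ℝ × ℝ) : ℝ :=
  -Real.log (branchDensity m c (c p.1) p.2).toReal

variable {m : Measure (ℝ × ℝ)}

lemma branchMarginal_le (a : Fin k) : branchMarginal m c a ≤ m.map Prod.snd :=
  Measure.map_mono Measure.restrict_le_self measurable_snd

lemma measurable_branchDensity (a : Fin k) : Measurable (branchDensity m c a) :=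
  Measure.measurable_rnDeriv _ _

lemma measurable_branchDensity_apply (hc : Measurable c) :
    Measurable fun p : ℝ × ℝ => branchDensity m c (c p.1) p.2 :=
  (measurable_from_prod_countable_right (f := fun q : Fin k × ℝ => branchDensity m c q.1 q.2)
    measurable_branchDensity).comp ((hc.comp measurable_fst).prodMk measurable_snd)

lemma measurable_branchInformation (hc : Measurable c) : Measurable (branchInformation m c) :=
  (measurable_branchDensity_apply hc).ennreal_toReal.log.neg

lemma ae_branch (hc : Measurable c) {s : Fin k → ℝ → Prop}
    (h : ∀ a, ∀ᵐ y ∂branchMarginal m c a, s a y) : ∀ᵐ p ∂m, s (c p.1) p.2 := by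
  have hbranch (a : Fin k) : ∀ᵐ p ∂m, c p.1 = a → s a p.2 :=
    (ae_restrict_iff' (hc.comp measurable_fst (measurableSet_singleton a))).1
      (ae_of_ae_map measurable_snd.aemeasurable (h a))
  filter_upwards [ae_all_iff.2 hbranch] with p hp
  exact hp _ rfl

variable [IsProbabilityMeasure m]

instance (a : Fin k) : IsFiniteMeasure (branchMarginal m c a) := by
  unfold branchMarginal
  infer_instance

lemma withDensity_branchDensity (a : Fin k) :
    (m.map Prod.snd).withDensity (branchDensity m c a) = branchMarginal m c a :=
  Measure.withDensity_rnDeriv_eq _ _ (branchMarginal_le a).absolutelyContinuous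

lemma branchDensity_le_one (a : Fin k) : ∀ᵐ y ∂m.map Prod.snd, branchDensity m c a y ≤ 1 :=
  Measure.rnDeriv_le_one_of_le (branchMarginal_le a)

lemma ae_branchDensity_mem_Ioc (hc : Measurable c) :
    ∀ᵐ p ∂m, branchDensity m c (c p.1) p.2 ∈ Ioc 0 1 :=
  ae_branch (s := fun a y => branchDensity m c a y ∈ Ioc 0 1) hc fun a => by
    filter_upwards [Measure.rnDeriv_pos (branchMarginal_le a).absolutelyContinuous,
      (branchMarginal_le a).absolutelyContinuous.ae_le (branchDensity_le_one a)] with y hpos hle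
    exact ⟨hpos, hle⟩

lemma ae_branchInformation_nonneg (hc : Measurable c) : ∀ᵐ p ∂m, 0 ≤ branchInformation m c p := by
  filter_upwards [ae_branchDensity_mem_Ioc hc] with p hp
  exact neg_nonneg.2 (Real.log_nonpos ENNReal.toReal_nonneg
    (ENNReal.toReal_mono ENNReal.one_ne_top hp.2))

lemma ae_ofReal_exp_branchInformation (hc : Measurable c) :
    ∀ᵐ p ∂m, ENNReal.ofReal (Real.exp (branchInformation m c p)) =
      (branchDensity m c (c p.1) p.2)⁻¹ := by
  filter_upwards [ae_branchDensity_mem_Ioc hc] with p hp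
  have hpos : 0 < (branchDensity m c (c p.1) p.2).toReal :=
    ENNReal.toReal_pos hp.1.ne' (hp.2.trans_lt ENNReal.one_lt_top).ne
  rw [branchInformation, Real.exp_neg, Real.exp_log hpos, ENNReal.ofReal_inv_of_pos hpos,
    ENNReal.ofReal_toReal (hp.2.trans_lt ENNReal.one_lt_top).ne]

/-- The measure `m` reweighted so that each branch contributes at most the whole ordinate
marginal. -/
noncomputable def equalizedMeasure (m : Measure (ℝ × ℝ)) (c : ℝ → Fin k) : Measure (ℝ × ℝ) :=
  m.withDensity fun p => (branchDensity m c (c p.1) p.2)⁻¹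

lemma map_snd_restrict_equalizedMeasure_le (hc : Measurable c) (a : Fin k) :
    ((equalizedMeasure m c).restrict {p | c p.1 = a}).map Prod.snd ≤ m.map Prod.snd := by
  have hB : MeasurableSet {p : ℝ × ℝ | c p.1 = a} :=
    hc.comp measurable_fst (measurableSet_singleton a)
  have hr := measurable_branchDensity (m := m) (c := c) a
  have hmap : ((equalizedMeasure m c).restrict {p | c p.1 = a}).map Prod.snd =
      (branchMarginal m c a).withDensity (branchDensity m c a)⁻¹ := by
    ext s hs
    rw [Measure.map_apply measurable_snd hs, equalizedMeasure, restrict_withDensity hB,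
      withDensity_apply _ (measurable_snd hs), withDensity_apply _ hs, branchMarginal,
      setLIntegral_map hs (f := (branchDensity m c a)⁻¹) hr.inv measurable_snd]
    refine lintegral_congr_ae (ae_restrict_of_ae ?_)
    filter_upwards [ae_restrict_mem hB] with p hp
    rw [show c p.1 = a from hp, Pi.inv_apply]
  rw [hmap, ← withDensity_branchDensity, ← withDensity_mul _ hr hr.inv]
  exact (withDensity_mono (.of_forall fun y => ENNReal.mul_inv_le_one _)).trans_eq withDensity_one

lemma isFiniteMeasure_equalizedMeasure (hc : Measurable c) :
    IsFiniteMeasure (equalizedMeasure m c) := by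
  have hcover : (univ : Set (ℝ × ℝ)) ⊆ ⋃ a, {p | c p.1 = a} := fun p _ => mem_iUnion.2 ⟨_, rfl⟩
  have hbranch (a : Fin k) : equalizedMeasure m c {p | c p.1 = a} ≤ m.map Prod.snd univ := by
    simpa [Measure.map_apply measurable_snd] using
      map_snd_restrict_equalizedMeasure_le (m := m) hc a univ
  refine ⟨(measure_mono hcover).trans_lt <| (measure_iUnion_fintype_le _ _).trans_lt ?_⟩
  exact ENNReal.sum_lt_top.2 fun a _ => (hbranch a).trans_lt (measure_lt_top _ _)

lemma integrable_exp_branchInformation (hc : Measurable c) :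
    Integrable (fun p => Real.exp (branchInformation m c p)) m := by
  have := isFiniteMeasure_equalizedMeasure (m := m) hc
  refine ⟨(measurable_branchInformation hc).exp.aestronglyMeasurable, ?_⟩
  rw [hasFiniteIntegral_iff_ofReal (.of_forall fun _ => (Real.exp_pos _).le),
    lintegral_congr_ae (ae_ofReal_exp_branchInformation hc)]
  simpa [equalizedMeasure] using measure_lt_top (equalizedMeasure m c) univ

lemma integrable_branchInformation (hc : Measurable c) : Integrable (branchInformation m c) m := by
  refine (integrable_exp_branchInformation hc).mono'
    (measurable_branchInformation hc).aestronglyMeasurable ?_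
  filter_upwards [ae_branchInformation_nonneg hc] with p hp
  rw [Real.norm_of_nonneg hp]
  linarith [Real.add_one_le_exp (branchInformation m c p)]

variable [NullSingletonClass (m.map Prod.fst)] [NullSingletonClass (m.map Prod.snd)]

lemma setLIntegral_patternSet_prod_inv_le (hc : Monotone c) (π : Equiv.Perm (Fin n)) :
    ∫⁻ p in {p | Prod.snd ∘ p ∈ patternSet π}, ∏ i, (branchDensity m c (c (p i).1) (p i).2)⁻¹
      ∂sortedSample m Prod.fst n ≤ (n + 1) ^ k := by
  have := Measure.isProbabilityMeasure_map (μ := m) measurable_snd.aemeasurable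
  have hfin := isFiniteMeasure_equalizedMeasure (m := m) hc.measurable
  have : IsFiniteMeasure (m.withDensity fun p => (branchDensity m c (c p.1) p.2)⁻¹) := hfin
  have hpi : (Measure.pi fun _ : Fin n => m).withDensity
        (fun p => ∏ i, (branchDensity m c (c (p i).1) (p i).2)⁻¹) =
      Measure.pi fun _ => equalizedMeasure m c :=
    (pi_withDensity (μ := fun _ : Fin n => m)
      (φ := fun _ p => (branchDensity m c (c p.1) p.2)⁻¹)
      fun _ => (measurable_branchDensity_apply hc.measurable).inv).symm
  have hpat := measurableSet_preimage_patternSet π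
  calc _ = n.factorial *
        ∫⁻ p in {p | StrictMono (Prod.fst ∘ p)} ∩ {p | Prod.snd ∘ p ∈ patternSet π},
          ∏ i, (branchDensity m c (c (p i).1) (p i).2)⁻¹ ∂Measure.pi fun _ => m := by
        rw [sortedSample_eq_factorial_smul_restrict measurable_fst, Measure.restrict_smul,
          lintegral_smul_measure, Measure.restrict_restrict hpat, inter_comm, smul_eq_mul]
    _ = n.factorial * (Measure.pi fun _ => equalizedMeasure m c)
          ({p | StrictMono (Prod.fst ∘ p)} ∩ {p | Prod.snd ∘ p ∈ patternSet π}) := by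
        rw [← hpi, withDensity_apply _
          ((measurableSet_setOf_strictMono_comp measurable_fst).inter hpat)]
    _ ≤ n.factorial * ((n + 1) ^ k * (Measure.pi fun _ => m.map Prod.snd) (patternSet π)) := by
        gcongr
        exact pi_strictMono_inter_le hc (map_snd_restrict_equalizedMeasure_le hc.measurable)
          (measurableSet_patternSet π)
    _ = (n + 1) ^ k := by
        rw [mul_left_comm, factorial_mul_pi_patternSet, mul_one]

/-- The Gibbs inequality against the weights `∏ 1 / branchDensity`, whose total mass on each pattern
is polynomial in `n`. -/
lemma mul_integral_branchInformation_le (hc : Monotone c) :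
    n * ∫ p, branchInformation m c p ∂m ≤ samplingEntropy m n + k * Real.log (n + 1) := by
  have := isProbabilityMeasure_sortedSample (μ := m) (n := n) measurable_fst
  have hexp := integrable_sortedSample_exp_sum (n := n) measurable_fst
    (measurable_branchInformation hc.measurable)
    (integrable_exp_branchInformation (m := m) hc.measurable)
  have hle (π : Equiv.Perm (Fin n)) : ∫ p in {p | Prod.snd ∘ p ∈ patternSet π},
      Real.exp (∑ i, branchInformation m c (p i)) ∂sortedSample m Prod.fst n ≤ (n + 1) ^ k := by
    rw [← ENNReal.ofReal_le_ofReal_iff (by positivity),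
      ofReal_integral_eq_lintegral_ofReal hexp.restrict (.of_forall fun _ => (Real.exp_pos _).le)]
    refine le_of_eq_of_le (lintegral_congr_ae (ae_restrict_of_ae ?_))
      ((setLIntegral_patternSet_prod_inv_le (m := m) hc π).trans_eq ?_)
    · filter_upwards [ae_sortedSample_of_ae measurable_fst
        (ae_ofReal_exp_branchInformation (m := m) hc.measurable)] with p hp
      rw [Real.exp_sum, ENNReal.ofReal_prod_of_nonneg fun _ _ => (Real.exp_pos _).le]
      exact Finset.prod_congr rfl fun i _ => hp i
    · rw [ENNReal.ofReal_pow (by positivity), ENNReal.ofReal_add (by positivity) zero_le_one]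
      simp
  have hint := integrable_branchInformation (m := m) hc.measurable
  have h := isAEPartition_patternSet.integral_le_partitionEntropy_add_log (by positivity)
    (integrable_sortedSample_sum measurable_fst (measurable_branchInformation hc.measurable) hint)
    hexp hle
  rwa [integral_sortedSample_sum measurable_fst (measurable_branchInformation hc.measurable) hint,
    ← samplingEntropy_eq_partitionEntropy, Real.log_pow] at h

end Branch

/-! ### Monotone branches and the upper bound -/

section Upper

variable {n k M : ℕ} {c : ℝ → Fin k} {R : Set (ℝ × ℝ)}

/-- Within `R`, the points of each branch `{p | c p.1 = a}` lie on an increasing curve or on a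
decreasing curve. -/
def HasMonotoneBranches (c : ℝ → Fin k) (R : Set (ℝ × ℝ)) : Prop :=
  ∀ a, (∀ p ∈ R, ∀ q ∈ R, c p.1 = a → c q.1 = a → p.1 < q.1 → p.2 < q.2) ∨
    ∀ p ∈ R, ∀ q ∈ R, c p.1 = a → c q.1 = a → p.1 < q.1 → q.2 < p.2

/-- The sequences of branches, listed by increasing ordinate, of the samples from `R` whose order
pattern is `π`. -/
def patternWords (c : ℝ → Fin k) (R : Set (ℝ × ℝ)) (π : Equiv.Perm (Fin n)) :
    Set (Fin n → Fin k) :=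
  {w | ∃ p : Fin n → ℝ × ℝ, StrictMono (Prod.fst ∘ p) ∧ Prod.snd ∘ p ∈ patternSet π ∧
    (∀ i, p i ∈ R) ∧ ∀ i, w (π i) = c (p i).1}

lemma HasMonotoneBranches.lt_iff_lt (hR : HasMonotoneBranches c R) {p q p' q' : ℝ × ℝ}
    (hp : p ∈ R) (hq : q ∈ R) (hp' : p' ∈ R) (hq' : q' ∈ R) (hpq : c p.1 = c q.1)
    (hpp' : c p.1 = c p'.1) (hpq' : c p.1 = c q'.1) (hlt : p.1 < q.1) (hlt' : p'.1 < q'.1) :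
    p.2 < q.2 ↔ p'.2 < q'.2 := by
  rcases hR (c p.1) with h | h
  · exact iff_of_true (h p hp q hq rfl hpq.symm hlt) (h p' hp' q' hq' hpp'.symm hpq'.symm hlt')
  · exact iff_of_false (h p hp q hq rfl hpq.symm hlt).not_gt
      (h p' hp' q' hq' hpp'.symm hpq'.symm hlt').not_gt

lemma HasMonotoneBranches.disjoint_patternWords (hc : Monotone c) (hR : HasMonotoneBranches c R)
    {π π' : Equiv.Perm (Fin n)} (hne : π ≠ π') :
    Disjoint (patternWords c R π) (patternWords c R π') := by
  refine disjoint_left.2 ?_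
  rintro w ⟨p, hp, hpat, hpR, hw⟩ ⟨p', hp', hpat', hpR', hw'⟩
  refine hne ?_
  set τ := π.trans π'.symm with hτ
  have hτπ (i : Fin n) : π' (τ i) = π i := by simp [hτ]
  have hbranch (i : Fin n) : c (p i).1 = c (p' (τ i)).1 := by rw [← hw, ← hw', hτπ]
  have hmono : Monotone fun i => c (p i).1 := hc.comp hp.monotone
  have hmono' : Monotone fun i => c (p' i).1 := hc.comp hp'.monotone
  have hτmono : StrictMono τ := by
    intro i j hij
    refine (τ.injective.ne hij.ne).lt_or_gt.resolve_right fun hτij => ?_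
    have hij_eq : c (p i).1 = c (p j).1 := (hmono hij.le).antisymm <| by
      simpa only [hbranch] using hmono' hτij.le
    have hiff : π i < π j ↔ π j < π i := by
      rw [← hpat i j hij, ← hτπ i, ← hτπ j, ← hpat' _ _ hτij]
      exact hR.lt_iff_lt (hpR i) (hpR j) (hpR' _) (hpR' _) hij_eq
        (hij_eq.trans (hbranch j)) (hbranch i) (hp hij) (hp' hτij)
    exact (π.injective.ne hij.ne).lt_or_gt.elim (fun h => h.not_gt (hiff.1 h))
      fun h => h.not_gt (hiff.2 h)
  have hτone := (Equiv.Perm.monotone_iff τ).1 hτmono.monotone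
  ext i
  rw [← hτπ i, hτone, Equiv.Perm.one_apply]

/-- The probability of a sequence of branches given the cells of the ordinates, summed over all
sequences of cells visited in increasing order. -/
noncomputable def wordWeight (ρ : Fin M → Fin k → ℝ) (w : Fin n → Fin k) : ℝ :=
  ∑ b : Fin n → Fin M with Monotone b, ∏ j, ρ (b j) (w j)

lemma wordWeight_nonneg {ρ : Fin M → Fin k → ℝ} (hρ : ∀ b a, 0 ≤ ρ b a) (w : Fin n → Fin k) :
    0 ≤ wordWeight ρ w :=
  Finset.sum_nonneg fun _ _ => Finset.prod_nonneg fun _ _ => hρ _ _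

lemma sum_wordWeight_le {ρ : Fin M → Fin k → ℝ} (hρ : ∀ b a, 0 ≤ ρ b a)
    (hsum : ∀ b, ∑ a, ρ b a ≤ 1) : ∑ w : Fin n → Fin k, wordWeight ρ w ≤ (n + 1) ^ M := by
  classical
  calc ∑ w : Fin n → Fin k, wordWeight ρ w
      = ∑ b : Fin n → Fin M with Monotone b, ∏ j, ∑ a, ρ (b j) a := by
        simp_rw [wordWeight, Finset.prod_univ_sum, Fintype.piFinset_univ]
        exact Finset.sum_comm
    _ ≤ ∑ b : Fin n → Fin M with Monotone b, 1 := Finset.sum_le_sum fun b _ =>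
        Finset.prod_le_one (fun j _ => Finset.sum_nonneg fun a _ => hρ _ a) fun j _ => hsum _
    _ ≤ (n + 1) ^ M := by
        rw [Finset.sum_const, nsmul_one]
        exact_mod_cast card_monotone_le n M

lemma prod_le_sum_wordWeight {ρ : Fin M → Fin k → ℝ} (hρ : ∀ b a, 0 ≤ ρ b a) {β : ℝ → Fin M}
    (hβ : Monotone β) {π : Equiv.Perm (Fin n)} {p : Fin n → ℝ × ℝ}
    (hp : StrictMono (Prod.fst ∘ p)) (hinj : Function.Injective (Prod.snd ∘ p))
    (hpat : Prod.snd ∘ p ∈ patternSet π) (hpR : ∀ i, p i ∈ R) :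
    ∏ i, ρ (β (p i).2) (c (p i).1) ≤
      ∑ w ∈ (patternWords c R π).toFinite.toFinset, wordWeight ρ w := by
  classical
  have hmono : Monotone fun j => β (p (π.symm j)).2 :=
    hβ.comp ((mem_patternSet_iff hinj).1 hpat).monotone
  calc ∏ i, ρ (β (p i).2) (c (p i).1)
      = ∏ j, ρ (β (p (π.symm j)).2) (c (p (π.symm j)).1) := (Equiv.prod_comp π.symm _).symm
    _ ≤ wordWeight ρ fun j => c (p (π.symm j)).1 :=
        Finset.single_le_sum (f := fun b : Fin n → Fin M => ∏ j, ρ (b j) (c (p (π.symm j)).1))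
          (fun _ _ => Finset.prod_nonneg fun _ _ => hρ _ _) (by simpa using hmono)
    _ ≤ ∑ w ∈ (patternWords c R π).toFinite.toFinset, wordWeight ρ w :=
        Finset.single_le_sum (f := wordWeight ρ) (fun w _ => wordWeight_nonneg hρ w) <| by
          rw [Finite.mem_toFinset]
          exact ⟨p, hp, hpat, hpR, by simp⟩

lemma HasMonotoneBranches.sum_sum_wordWeight_le (hc : Monotone c) (hR : HasMonotoneBranches c R)
    {ρ : Fin M → Fin k → ℝ} (hρ : ∀ b a, 0 ≤ ρ b a) (hsum : ∀ b, ∑ a, ρ b a ≤ 1) :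
    ∑ π : Equiv.Perm (Fin n), ∑ w ∈ (patternWords c R π).toFinite.toFinset, wordWeight ρ w ≤
      (n + 1) ^ M := by
  classical
  rw [← Finset.sum_biUnion fun π _ π' _ hne =>
    (Finite.disjoint_toFinset).2 (hR.disjoint_patternWords hc hne)]
  exact (Finset.sum_le_univ_sum_of_nonneg fun w => wordWeight_nonneg hρ w).trans
    (sum_wordWeight_le hρ hsum)

variable {m : Measure (ℝ × ℝ)} [IsProbabilityMeasure m] [NullSingletonClass (m.map Prod.fst)]
variable [NullSingletonClass (m.map Prod.snd)]

/-- The Gibbs inequality against the weights of the words that realize each pattern; the words of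
distinct patterns are distinct. -/
lemma HasMonotoneBranches.samplingEntropy_le (hc : Monotone c) (hR : HasMonotoneBranches c R)
    (hmR : ∀ᵐ p ∂m, p ∈ R) {β : ℝ → Fin M} (hβ : Monotone β) {ρ : Fin M → Fin k → ℝ}
    (hρ : ∀ b a, 0 < ρ b a) (hsum : ∀ b, ∑ a, ρ b a ≤ 1) :
    samplingEntropy m n ≤
      n * ∫ p, -Real.log (ρ (β p.2) (c p.1)) ∂m + M * Real.log (n + 1) := by
  have hρ' (b : Fin M) (a : Fin k) : 0 ≤ ρ b a := (hρ b a).le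
  have hcell : Measurable fun p : ℝ × ℝ => (β p.2, c p.1) :=
    (hβ.measurable.comp measurable_snd).prodMk (hc.measurable.comp measurable_fst)
  have hmeas : Measurable fun p : ℝ × ℝ => -Real.log (ρ (β p.2) (c p.1)) :=
    (measurable_of_finite fun q : Fin M × Fin k => -Real.log (ρ q.1 q.2)).comp hcell
  have := Measure.isProbabilityMeasure_map (μ := m) hcell.aemeasurable
  have hint : Integrable (fun p : ℝ × ℝ => -Real.log (ρ (β p.2) (c p.1))) m :=
    (Integrable.of_finite (f := fun q : Fin M × Fin k => -Real.log (ρ q.1 q.2))).comp_measurable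
      hcell
  have := isProbabilityMeasure_sortedSample (μ := m) (n := n) measurable_fst
  have h := isAEPartition_patternSet.partitionEntropy_le_integral_add_log (by positivity)
    (integrable_sortedSample_sum (n := n) measurable_fst hmeas hint)
    (fun π => Finset.sum_nonneg fun w _ => wordWeight_nonneg hρ' w)
    (hR.sum_sum_wordWeight_le hc hρ' hsum) ?_
  · rwa [integral_sortedSample_sum measurable_fst hmeas hint,
      ← samplingEntropy_eq_partitionEntropy, Real.log_pow] at h
  filter_upwards [ae_sortedSample_strictMono measurable_fst,
    ae_sortedSample_of_ae measurable_fst hmR,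
    (sortedSample_absolutelyContinuous measurable_fst).ae_le
      (ae_pi_injective_comp (μ := m) measurable_snd)] with p hp hpR hinj π hpat
  simp_rw [Finset.sum_neg_distrib, neg_neg, Real.exp_sum, Real.exp_log (hρ _ _)]
  exact prod_le_sum_wordWeight hρ' hβ hp hinj hpat hpR

end Upper

/-! ### Uniform ordinates and the limit -/

section Cell

/-- The `b`-th closed interval of the subdivision of `[0, 1]` into `M + 1` equal parts, as a ball so
that the Lebesgue differentiation theorem applies. -/
def cell (M : ℕ) (b : Fin (M + 1)) : Set ℝ :=
  Metric.closedBall (((b : ℝ) + 1 / 2) / (M + 1)) (1 / 2 / (M + 1))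

/-- The index of a cell containing `y ∈ [0, 1]`. -/
noncomputable def cellIndex (M : ℕ) (y : ℝ) : Fin (M + 1) :=
  ⟨min ⌊(M + 1) * y⌋₊ M, Nat.lt_succ_of_le (min_le_right _ _)⟩

lemma monotone_cellIndex (M : ℕ) : Monotone (cellIndex M) := by
  intro y z h
  simp only [cellIndex, Fin.mk_le_mk]
  gcongr

lemma mem_cell_cellIndex (M : ℕ) {y : ℝ} (hy : y ∈ Icc 0 1) : y ∈ cell M (cellIndex M y) := by
  have hM : (0 : ℝ) < M + 1 := by positivity
  have hlower : (cellIndex M y : ℝ) ≤ (M + 1) * y :=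
    (Nat.cast_le.2 (min_le_left _ _)).trans (Nat.floor_le (mul_nonneg hM.le hy.1))
  have hupper : (M + 1) * y ≤ cellIndex M y + 1 := by
    have hfloor : (M + 1) * y < ⌊(M + 1) * y⌋₊ + 1 := Nat.lt_floor_add_one _
    simp only [cellIndex, Nat.cast_min]
    rcases min_choice (⌊(M + 1) * y⌋₊ : ℝ) M with h | h <;> rw [h] <;> nlinarith [hy.2]
  rw [cell, Real.closedBall_eq_Icc, ← sub_div, ← add_div, mem_Icc, div_le_iff₀ hM, le_div_iff₀ hM]
  constructor <;> linarith

lemma tendsto_cell_filterAt {y : ℝ} (hy : y ∈ Icc 0 1) :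
    Tendsto (fun M => cell M (cellIndex M y)) atTop
      ((IsUnifLocDoublingMeasure.vitaliFamily volume 1).filterAt y) := by
  refine IsUnifLocDoublingMeasure.tendsto_closedBall_filterAt _ _ _
    (tendsto_nhdsWithin_iff.2 ⟨?_, .of_forall fun M => ?_⟩) (.of_forall fun M => ?_)
  · exact tendsto_const_nhds.div_atTop
      (tendsto_natCast_atTop_atTop.atTop_add (tendsto_const_nhds (x := (1 : ℝ))))
  · exact mem_Ioi.2 (by positivity)
  · rw [one_mul]
    exact mem_cell_cellIndex M hy

end Cell

section Limit

variable {k : ℕ} {c : ℝ → Fin k} {m : Measure (ℝ × ℝ)} {ε : ℝ} {M : ℕ}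

/-- The proportion of branch `a` among the points whose ordinate lies in the cell `b`, when the
ordinates are uniform. -/
noncomputable def cellDensity (m : Measure (ℝ × ℝ)) (c : ℝ → Fin k) (M : ℕ) (b : Fin (M + 1))
    (a : Fin k) : ℝ≥0∞ :=
  branchMarginal m c a (cell M b) / volume (cell M b)

lemma sum_branchMarginal (hc : Measurable c) {s : Set ℝ} (hs : MeasurableSet s) :
    ∑ a, branchMarginal m c a s = m.map Prod.snd s := by
  simp_rw [branchMarginal, Measure.map_apply measurable_snd hs,
    Measure.restrict_apply (measurable_snd hs)]
  rw [← measure_biUnion_finset]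
  · congr 1
    ext p
    simp
  · exact fun a _ a' _ hne => disjoint_left.2 fun p hp hp' => hne (hp.2.symm.trans hp'.2)
  · exact fun a _ => (measurable_snd hs).inter (hc.comp measurable_fst (measurableSet_singleton a))

lemma sum_cellDensity_le_one (hc : Measurable c) (hm : m.map Prod.snd = volume.restrict (Icc 0 1))
    (M : ℕ) (b : Fin (M + 1)) : ∑ a, cellDensity m c M b a ≤ 1 := by
  have hcell : MeasurableSet (cell M b) := Metric.isClosed_closedBall.measurableSet
  simp_rw [cellDensity, div_eq_mul_inv, ← Finset.sum_mul]
  rw [sum_branchMarginal hc hcell, hm, ← div_eq_mul_inv]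
  exact ENNReal.div_le_of_le_mul ((one_mul (volume (cell M b))).symm ▸ Measure.restrict_le_self _)

/-- The cell density mixed with the uniform distribution, which bounds it away from `0`. -/
noncomputable def mixedDensity (m : Measure (ℝ × ℝ)) (c : ℝ → Fin k) (ε : ℝ) (M : ℕ)
    (b : Fin (M + 1)) (a : Fin k) : ℝ :=
  (1 - ε) * (cellDensity m c M b a).toReal + ε / k

lemma div_le_mixedDensity (hε : ε < 1) (b : Fin (M + 1)) (a : Fin k) :
    ε / k ≤ mixedDensity m c ε M b a :=
  le_add_of_nonneg_left (mul_nonneg (sub_nonneg.2 hε.le) ENNReal.toReal_nonneg)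

lemma sum_mixedDensity_le_one (hc : Measurable c) (hm : m.map Prod.snd = volume.restrict (Icc 0 1))
    (hε₀ : 0 < ε) (hε₁ : ε < 1) (b : Fin (M + 1)) : ∑ a, mixedDensity m c ε M b a ≤ 1 := by
  have hsum := sum_cellDensity_le_one hc hm M b
  have hfin : ∀ a ∈ Finset.univ, cellDensity m c M b a ≠ ∞ :=
    ENNReal.sum_ne_top.1 (hsum.trans_lt ENNReal.one_lt_top).ne
  have hreal : ∑ a, (cellDensity m c M b a).toReal ≤ 1 := by
    rw [← ENNReal.toReal_sum hfin]
    exact ENNReal.toReal_mono ENNReal.one_ne_top hsum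
  have huniform : ∑ _a : Fin k, ε / k ≤ ε := by
    rw [Finset.sum_const, Finset.card_univ, Fintype.card_fin, nsmul_eq_mul, mul_div_left_comm]
    exact mul_le_of_le_one_right hε₀.le (div_self_le_one _)
  simp_rw [mixedDensity]
  rw [Finset.sum_add_distrib, ← Finset.mul_sum]
  nlinarith

variable [IsProbabilityMeasure m]

lemma withDensity_indicator_branchDensity (hm : m.map Prod.snd = volume.restrict (Icc 0 1))
    (a : Fin k) : volume.withDensity ((Icc 0 1).indicator (branchDensity m c a)) =
      branchMarginal m c a := by
  rw [withDensity_indicator measurableSet_Icc, ← hm, withDensity_branchDensity]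

lemma ae_tendsto_cellDensity (hc : Measurable c) (hm : m.map Prod.snd = volume.restrict (Icc 0 1)) :
    ∀ᵐ p ∂m, Tendsto (fun M => cellDensity m c M (cellIndex M p.2) (c p.1)) atTop
      (𝓝 (branchDensity m c (c p.1) p.2)) := by
  refine ae_branch hc (s := fun a y => Tendsto (fun M => cellDensity m c M (cellIndex M y) a) atTop
    (𝓝 (branchDensity m c a y))) fun a => ?_
  refine (branchMarginal_le a).absolutelyContinuous.ae_le ?_
  have hrn : (branchMarginal m c a).rnDeriv volume =ᵐ[volume]
      (Icc 0 1).indicator (branchDensity m c a) := by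
    rw [← withDensity_indicator_branchDensity hm]
    exact Measure.rnDeriv_withDensity _ ((measurable_branchDensity a).indicator measurableSet_Icc)
  rw [hm]
  filter_upwards [ae_restrict_of_ae hrn, ae_restrict_mem measurableSet_Icc, ae_restrict_of_ae
    (VitaliFamily.ae_tendsto_rnDeriv (IsUnifLocDoublingMeasure.vitaliFamily volume 1)
      (branchMarginal m c a))] with y hy hmem hlim
  rw [hy, indicator_of_mem hmem] at hlim
  exact hlim.comp (tendsto_cell_filterAt hmem)

lemma tendsto_integral_neg_log_mixedDensity (hc : Measurable c)
    (hm : m.map Prod.snd = volume.restrict (Icc 0 1)) (hε₀ : 0 < ε) (hε₁ : ε < 1) :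
    Tendsto (fun M => ∫ p, -Real.log (mixedDensity m c ε M (cellIndex M p.2) (c p.1)) ∂m) atTop
      (𝓝 (∫ p, -Real.log ((1 - ε) * (branchDensity m c (c p.1) p.2).toReal + ε / k) ∂m)) := by
  have hpos (a : Fin k) : 0 < ε / k := div_pos hε₀ (Nat.cast_pos.2 a.pos)
  refine tendsto_integral_of_dominated_convergence (fun _ => -Real.log (ε / k)) (fun M => ?_)
    (integrable_const _) (fun M => .of_forall fun p => ?_) ?_
  · exact ((measurable_of_finite fun q : Fin (M + 1) × Fin k =>
      -Real.log (mixedDensity m c ε M q.1 q.2)).comp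
        (((monotone_cellIndex M).measurable.comp measurable_snd).prodMk
          (hc.comp measurable_fst))).aestronglyMeasurable
  · have hle := div_le_mixedDensity (m := m) (c := c) hε₁ (cellIndex M p.2) (c p.1)
    have hle_one : mixedDensity m c ε M (cellIndex M p.2) (c p.1) ≤ 1 :=
      (Finset.single_le_sum (f := mixedDensity m c ε M (cellIndex M p.2))
        (fun a _ => (hpos a).le.trans (div_le_mixedDensity hε₁ _ a)) (Finset.mem_univ _)).trans
          (sum_mixedDensity_le_one hc hm hε₀ hε₁ _)
    rw [Real.norm_of_nonneg (neg_nonneg.2 <| Real.log_nonpos ((hpos (c p.1)).le.trans hle) hle_one)]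
    exact neg_le_neg (Real.log_le_log (hpos (c p.1)) hle)
  · filter_upwards [ae_tendsto_cellDensity hc hm, ae_branchDensity_mem_Ioc hc] with p hlim hp
    have hreal := (ENNReal.tendsto_toReal (hp.2.trans_lt ENNReal.one_lt_top).ne).comp hlim
    have hmixed : 0 < (1 - ε) * (branchDensity m c (c p.1) p.2).toReal + ε / k :=
      add_pos_of_nonneg_of_pos (mul_nonneg (sub_nonneg.2 hε₁.le) ENNReal.toReal_nonneg)
        (hpos (c p.1))
    exact (((hreal.const_mul _).add_const _).log hmixed.ne').neg

lemma integral_neg_log_add_le (hc : Measurable c) (hε₀ : 0 < ε) (hε₁ : ε < 1) :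
    ∫ p, -Real.log ((1 - ε) * (branchDensity m c (c p.1) p.2).toReal + ε / k) ∂m ≤
      ∫ p, branchInformation m c p ∂m - Real.log (1 - ε) := by
  have hint := integrable_branchInformation (m := m) hc
  calc _ ≤ ∫ p, (branchInformation m c p - Real.log (1 - ε)) ∂m := by
        refine integral_mono_of_nonneg ?_ (hint.sub (integrable_const _)) ?_
        all_goals
          filter_upwards [ae_branchDensity_mem_Ioc hc] with p hp
          have hk : (1 : ℝ) ≤ k := Nat.one_le_cast.2 (c p.1).pos
          have hr : 0 < (branchDensity m c (c p.1) p.2).toReal :=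
            ENNReal.toReal_pos hp.1.ne' (hp.2.trans_lt ENNReal.one_lt_top).ne
          have hprod := mul_pos (sub_pos.2 hε₁) hr
        · have hr_one := ENNReal.toReal_mono ENNReal.one_ne_top hp.2
          have hk_div := div_le_self hε₀.le hk
          rw [ENNReal.toReal_one] at hr_one
          exact neg_nonneg.2 (Real.log_nonpos (by positivity) (by nlinarith))
        · have hlog := Real.log_le_log hprod (le_add_of_nonneg_right (b := ε / k) (by positivity))
          rw [Real.log_mul (sub_pos.2 hε₁).ne' hr.ne'] at hlog
          simp only [branchInformation]
          linarith
    _ = ∫ p, branchInformation m c p ∂m - Real.log (1 - ε) := by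
        rw [integral_sub hint (integrable_const _)]
        simp

lemma exists_integral_neg_log_mixedDensity_lt (hc : Measurable c)
    (hm : m.map Prod.snd = volume.restrict (Icc 0 1)) {a : ℝ}
    (ha : ∫ p, branchInformation m c p ∂m < a) : ∃ ε ∈ Ioo (0 : ℝ) 1, ∃ M,
      ∫ p, -Real.log (mixedDensity m c ε M (cellIndex M p.2) (c p.1)) ∂m < a := by
  set ε := 1 - Real.exp (-((a - ∫ p, branchInformation m c p ∂m) / 2)) with hε
  have hε₀ : 0 < ε := sub_pos.2 (Real.exp_lt_one_iff.2 (by linarith))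
  have hε₁ : ε < 1 := sub_lt_self _ (Real.exp_pos _)
  refine ⟨ε, ⟨hε₀, hε₁⟩, ((tendsto_integral_neg_log_mixedDensity hc hm hε₀ hε₁).eventually_lt_const
    ((integral_neg_log_add_le hc hε₀ hε₁).trans_lt ?_)).exists⟩
  rw [hε, sub_sub_cancel, Real.log_exp]
  linarith

lemma tendsto_mul_log_div (C : ℝ) :
    Tendsto (fun n : ℕ => C * Real.log (n + 1) / n) atTop (𝓝 0) := by
  have hshift : Tendsto (fun n : ℕ => (n : ℝ) + 1) atTop atTop :=
    tendsto_natCast_atTop_atTop.atTop_add tendsto_const_nhds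
  have hbound : (fun n : ℕ => (n : ℝ) + 1) =O[atTop] fun n : ℕ => (n : ℝ) := by
    refine .of_bound 2 ?_
    filter_upwards [eventually_ge_atTop 1] with n hn
    have hn' : (1 : ℝ) ≤ n := Nat.one_le_cast.2 hn
    rw [Real.norm_of_nonneg (by positivity), Real.norm_of_nonneg (by positivity)]
    linarith
  have hlittle := (Real.isLittleO_log_id_atTop.comp_tendsto hshift).trans_isBigO hbound
  simpa [mul_div_assoc] using hlittle.tendsto_div_nhds_zero.const_mul C

theorem tendsto_samplingEntropy_div [NullSingletonClass (m.map Prod.fst)]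
    (hm : m.map Prod.snd = volume.restrict (Icc 0 1)) (hc : Monotone c) {R : Set (ℝ × ℝ)}
    (hR : HasMonotoneBranches c R) (hmR : ∀ᵐ p ∂m, p ∈ R) :
    Tendsto (fun n : ℕ => samplingEntropy m n / n) atTop (𝓝 (∫ p, branchInformation m c p ∂m)) := by
  have : NullSingletonClass (m.map Prod.snd) := hm ▸ inferInstance
  refine tendsto_order.2 ⟨fun a ha => ?_, fun a ha => ?_⟩
  · have hlim := (tendsto_mul_log_div k).const_sub (∫ p, branchInformation m c p ∂m)
    rw [sub_zero] at hlim
    filter_upwards [hlim.eventually_const_lt ha, eventually_gt_atTop 0] with n hlt hn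
    have hn' : (0 : ℝ) < n := Nat.cast_pos.2 hn
    refine hlt.trans_le ((le_div_iff₀ hn').2 ?_)
    rw [sub_mul, div_mul_cancel₀ _ hn'.ne']
    linarith [mul_integral_branchInformation_le (n := n) (m := m) hc]
  · obtain ⟨ε, ⟨hε₀, hε₁⟩, M, hM⟩ := exists_integral_neg_log_mixedDensity_lt hc.measurable hm ha
    have hpos (b : Fin (M + 1)) (a : Fin k) : 0 < mixedDensity m c ε M b a :=
      (div_pos hε₀ (Nat.cast_pos.2 a.pos)).trans_le (div_le_mixedDensity hε₁ b a)
    have hlim := (tendsto_mul_log_div (M + 1 : ℕ)).const_add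
      (∫ p, -Real.log (mixedDensity m c ε M (cellIndex M p.2) (c p.1)) ∂m)
    rw [add_zero] at hlim
    filter_upwards [hlim.eventually_lt_const hM, eventually_gt_atTop 0] with n hlt hn
    have hn' : (0 : ℝ) < n := Nat.cast_pos.2 hn
    refine ((div_le_iff₀ hn').2 ?_).trans_lt hlt
    rw [add_mul, div_mul_cancel₀ _ hn'.ne', mul_comm (∫ _, _ ∂m)]
    exact hR.samplingEntropy_le hc hmR (monotone_cellIndex M) hpos
      (sum_mixedDensity_le_one hc.measurable hm hε₀ hε₁)

end Limit

/-! ### Piecewise differentiable maps -/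

section Derivative

variable {f g : ℝ → ℝ}

lemma one_le_abs_of_hasDerivAt (hf : Measurable f)
    (hmp : (volume.restrict (Icc 0 1)).map f = volume.restrict (Icc 0 1)) {t d : ℝ}
    (ht : t ∈ Ioo 0 1) (hd : HasDerivAt f d t) : 1 ≤ |d| := by
  by_contra! hlt
  obtain ⟨C, hdC, hC⟩ := exists_between hlt
  have hC₀ : 0 < C := (abs_nonneg d).trans_lt hdC
  have hslope := hd.hasDerivWithinAt.limsup_norm_slope_le (s := univ) hdC
  rw [nhdsWithin_univ] at hslope
  obtain ⟨η, hη, hball⟩ := Metric.eventually_nhds_iff_ball.1 (hslope.and (Ioo_mem_nhds ht.1 ht.2))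
  have hsub : Metric.ball t η ⊆ Icc 0 1 := fun u hu => Ioo_subset_Icc_self (hball u hu).2
  have himage : Metric.ball t η ⊆ f ⁻¹' Metric.closedBall (f t) (C * η) := by
    intro u hu
    rw [mem_preimage, mem_closedBall_iff_norm]
    rcases eq_or_ne u t with rfl | hne
    · simpa using by positivity
    · have hnorm := (inv_mul_lt_iff₀ (norm_pos_iff.2 (sub_ne_zero.2 hne))).1 (hball u hu).1
      have hu' := (mem_ball_iff_norm.1 hu).le
      nlinarith
  have hvol : volume (Metric.ball t η) ≤ volume (Metric.closedBall (f t) (C * η)) :=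
    calc volume (Metric.ball t η) = volume.restrict (Icc 0 1) (Metric.ball t η) :=
          (Measure.restrict_eq_self _ hsub).symm
      _ ≤ volume.restrict (Icc 0 1) (f ⁻¹' Metric.closedBall (f t) (C * η)) :=
          measure_mono himage
      _ ≤ volume (Metric.closedBall (f t) (C * η)) := by
          rw [← Measure.map_apply hf Metric.isClosed_closedBall.measurableSet, hmp]
          exact Measure.restrict_apply_le _ _
  rw [Real.volume_ball, Real.volume_closedBall,
    ENNReal.ofReal_le_ofReal_iff (by positivity)] at hvol
  nlinarith

lemma strictMonoOn_or_strictAntiOn_of_hasDerivAt_ne_zero {P : Set ℝ} (hP : Convex ℝ P)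
    (hd : ∀ t ∈ P, HasDerivAt f (g t) t) (hg : ∀ t ∈ P, g t ≠ 0) :
    StrictMonoOn f P ∨ StrictAntiOn f P := by
  have hcont : ContinuousOn f P := fun t ht => (hd t ht).continuousAt.continuousWithinAt
  have hderiv (t : ℝ) (ht : t ∈ interior P) : deriv f t = g t := (hd t (interior_subset ht)).deriv
  rcases hasDerivWithinAt_forall_lt_or_forall_gt_of_forall_ne hP
    (fun t ht => (hd t ht).hasDerivWithinAt) hg with hneg | hpos
  · exact .inr <| strictAntiOn_of_deriv_neg hP hcont fun t ht =>
      (hderiv t ht).trans_lt (hneg t (interior_subset ht))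
  · exact .inl <| strictMonoOn_of_deriv_pos hP hcont fun t ht =>
      (hpos t (interior_subset ht)).trans_eq (hderiv t ht).symm

end Derivative

section Breakpoints

variable {s : Finset ℝ}

/-- The number of breakpoints in `s` that are at most `t`, which labels the components of the
complement of `s` from left to right. -/
noncomputable def pieceIndex (s : Finset ℝ) (t : ℝ) : Fin (s.card + 1) :=
  ⟨(s.filter (· ≤ t)).card, Nat.lt_succ_of_le (Finset.card_filter_le _ _)⟩

lemma monotone_pieceIndex : Monotone (pieceIndex s) := fun _ _ h =>
  Finset.card_le_card (Finset.monotone_filter_right s fun _ _ ha => ha.trans h)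

/-- The part of `(0, 1) \ s` with index `a`. -/
def piece (s : Finset ℝ) (a : Fin (s.card + 1)) : Set ℝ :=
  {t ∈ Ioo 0 1 \ (s : Set ℝ) | pieceIndex s t = a}

lemma convex_piece (a : Fin (s.card + 1)) : Convex ℝ (piece s a) := by
  refine OrdConnected.convex ⟨fun t ht v hv u hu => ?_⟩
  have htu : pieceIndex s t = pieceIndex s u := (monotone_pieceIndex hu.1).antisymm <|
    (monotone_pieceIndex hu.2).trans_eq (hv.2.trans ht.2.symm)
  refine ⟨⟨⟨ht.1.1.1.trans_le hu.1, hu.2.trans_lt hv.1.1.2⟩, fun hus => ?_⟩, htu ▸ ht.2⟩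
  have hlt : t < u := hu.1.lt_of_ne fun h => ht.1.2 (h ▸ hus)
  refine (Finset.card_lt_card (Finset.ssubset_iff_subset_ne.2
    ⟨Finset.monotone_filter_right s fun _ _ ha => ha.trans hu.1, fun h => ?_⟩)).ne
      (Fin.ext_iff.1 htu)
  have hmem : u ∈ s.filter (· ≤ t) := by
    rw [h]
    exact Finset.mem_filter.2 ⟨hus, le_rfl⟩
  exact hlt.not_ge (Finset.mem_filter.1 hmem).2

lemma measurableSet_piece (a : Fin (s.card + 1)) : MeasurableSet (piece s a) :=
  (convex_piece a).ordConnected.measurableSet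

lemma ae_mem_piece : ∀ᵐ t ∂volume.restrict (Icc 0 1), t ∈ piece s (pieceIndex s t) := by
  rw [← Measure.restrict_congr_set Ioo_ae_eq_Icc]
  filter_upwards [ae_restrict_mem measurableSet_Ioo,
    ae_restrict_of_ae (s.finite_toSet.countable.ae_notMem volume)] with t ht hts
  exact ⟨⟨ht, hts⟩, rfl⟩

end Breakpoints

section Graph

variable {f g : ℝ → ℝ} {k : ℕ} {c : ℝ → Fin k}

lemma isProbabilityMeasure_graphPermuton (hf : Measurable f) :
    IsProbabilityMeasure (graphPermuton f) := by
  have : IsProbabilityMeasure (volume.restrict (Icc (0 : ℝ) 1)) := ⟨by simp⟩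
  exact Measure.isProbabilityMeasure_map (measurable_id.prodMk hf).aemeasurable

lemma map_fst_graphPermuton (hf : Measurable f) :
    (graphPermuton f).map Prod.fst = volume.restrict (Icc 0 1) :=
  (Measure.map_map measurable_fst (measurable_id.prodMk hf)).trans Measure.map_id

lemma map_snd_graphPermuton (hf : Measurable f) :
    (graphPermuton f).map Prod.snd = (volume.restrict (Icc 0 1)).map f :=
  Measure.map_map measurable_snd (measurable_id.prodMk hf)

lemma branchMarginal_graphPermuton_apply (hf : Measurable f) (hc : Measurable c) (a : Fin k)
    {B : Set ℝ} (hB : MeasurableSet B) : branchMarginal (graphPermuton f) c a B =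
      volume.restrict (Icc 0 1) (f ⁻¹' B ∩ {t | c t = a}) := by
  have hbranch : MeasurableSet {p : ℝ × ℝ | c p.1 = a} :=
    hc.comp measurable_fst (measurableSet_singleton a)
  have hgraph : Measurable fun t => (t, f t) := measurable_id.prodMk hf
  rw [branchMarginal, Measure.map_apply measurable_snd hB,
    Measure.restrict_apply (measurable_snd hB), graphPermuton,
    Measure.map_apply hgraph ((measurable_snd hB).inter hbranch)]
  rfl

lemma setLIntegral_abs_deriv_mul_branchDensity (hf : Measurable f)
    (hmp : (volume.restrict (Icc 0 1)).map f = volume.restrict (Icc 0 1)) (hc : Measurable c)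
    {a : Fin k} {P : Set ℝ} (hPc : {t | c t = a} =ᵐ[volume.restrict (Icc 0 1)] P)
    (hd : ∀ t ∈ P, HasDerivAt f (g t) t) (hinj : InjOn f P) {A : Set ℝ} (hA : MeasurableSet A)
    (hAP : A ⊆ P) (hAI : A ⊆ Icc 0 1) :
    ∫⁻ t in A, ENNReal.ofReal |g t| *
      (Icc 0 1).indicator (branchDensity (graphPermuton f) c a) (f t) = volume A := by
  have := isProbabilityMeasure_graphPermuton hf
  have hder (t : ℝ) (ht : t ∈ A) : HasDerivWithinAt f (g t) A t := (hd t (hAP ht)).hasDerivWithinAt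
  have himage : MeasurableSet (f '' A) := hA.image_of_continuousOn_injOn
    (fun t ht => (hder t ht).continuousWithinAt) (hinj.mono hAP)
  calc _ = ∫⁻ y in f '' A, (Icc 0 1).indicator (branchDensity (graphPermuton f) c a) y :=
        (lintegral_image_eq_lintegral_abs_deriv_mul hA hder (hinj.mono hAP) _).symm
    _ = branchMarginal (graphPermuton f) c a (f '' A) := by
        rw [← withDensity_indicator_branchDensity ((map_snd_graphPermuton hf).trans hmp),
          withDensity_apply _ himage]
    _ = volume.restrict (Icc 0 1) (f ⁻¹' (f '' A) ∩ P) := by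
        rw [branchMarginal_graphPermuton_apply hf hc a himage]
        exact measure_congr ((ae_eq_refl _).inter hPc)
    _ = volume A := by
        rw [hinj.preimage_image_inter hAP, Measure.restrict_eq_self _ hAI]

lemma ae_abs_deriv_mul_branchDensity_eq_one (hf : Measurable f)
    (hmp : (volume.restrict (Icc 0 1)).map f = volume.restrict (Icc 0 1)) (hc : Measurable c)
    {a : Fin k} {P : Set ℝ} (hP : MeasurableSet P) (hPI : P ⊆ Icc 0 1)
    (hPc : {t | c t = a} =ᵐ[volume.restrict (Icc 0 1)] P)
    (hd : ∀ t ∈ P, HasDerivAt f (g t) t) (hinj : InjOn f P) :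
    ∀ᵐ t ∂volume.restrict P, ENNReal.ofReal |g t| *
      (Icc 0 1).indicator (branchDensity (graphPermuton f) c a) (f t) = 1 := by
  have hg : AEMeasurable g (volume.restrict P) :=
    (measurable_deriv f).aemeasurable.congr <| (ae_restrict_mem hP).mono fun t ht => (hd t ht).deriv
  have hdensity : Measurable fun t =>
      (Icc 0 1).indicator (branchDensity (graphPermuton f) c a) (f t) :=
    ((measurable_branchDensity a).indicator measurableSet_Icc).comp hf
  refine ae_eq_of_forall_setLIntegral_eq_of_sigmaFinite₀
    ((measurable_norm.comp_aemeasurable hg).ennreal_ofReal.mul hdensity.aemeasurable)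
    aemeasurable_const fun A hA _ => ?_
  rw [Measure.restrict_restrict hA, setLIntegral_one]
  exact setLIntegral_abs_deriv_mul_branchDensity hf hmp hc hPc hd hinj (hA.inter hP)
    inter_subset_right (inter_subset_right.trans hPI)

end Graph

section Piecewise

variable {f g : ℝ → ℝ} {s : Finset ℝ}

lemma strictMonoOn_or_strictAntiOn_piece (hf : Measurable f)
    (hmp : (volume.restrict (Icc 0 1)).map f = volume.restrict (Icc 0 1))
    (hd : ∀ t ∈ Ioo 0 1 \ (s : Set ℝ), HasDerivAt f (g t) t) (a : Fin (s.card + 1)) :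
    StrictMonoOn f (piece s a) ∨ StrictAntiOn f (piece s a) :=
  strictMonoOn_or_strictAntiOn_of_hasDerivAt_ne_zero (convex_piece a) (fun t ht => hd t ht.1)
    fun t ht => abs_pos.1 <|
      zero_lt_one.trans_le (one_le_abs_of_hasDerivAt hf hmp ht.1.1 (hd t ht.1))

lemma hasMonotoneBranches_pieceIndex (hf : Measurable f)
    (hmp : (volume.restrict (Icc 0 1)).map f = volume.restrict (Icc 0 1))
    (hd : ∀ t ∈ Ioo 0 1 \ (s : Set ℝ), HasDerivAt f (g t) t) :
    HasMonotoneBranches (pieceIndex s)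
      {p | p.1 ∈ Ioo 0 1 \ (s : Set ℝ) ∧ p.2 = f p.1} := by
  intro a
  refine (strictMonoOn_or_strictAntiOn_piece hf hmp hd a).imp ?_ ?_
  all_goals
    intro h p hp q hq hpa hqa hpq
    rw [hp.2, hq.2]
    exact h ⟨hp.1, hpa⟩ ⟨hq.1, hqa⟩ hpq

lemma ae_graphPermuton_snd_eq (hf : Measurable f) :
    ∀ᵐ p ∂graphPermuton f, p.1 ∈ Ioo 0 1 \ (s : Set ℝ) ∧ p.2 = f p.1 := by
  have hmeas : MeasurableSet {p : ℝ × ℝ | p.1 ∈ Ioo 0 1 \ (s : Set ℝ) ∧ p.2 = f p.1} :=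
    (measurable_fst (measurableSet_Ioo.diff s.measurableSet)).inter
      (measurableSet_eq_fun measurable_snd (hf.comp measurable_fst))
  refine (ae_map_iff (measurable_id.prodMk hf).aemeasurable hmeas).2 ?_
  exact ae_mem_piece.mono fun t ht => ⟨ht.1, rfl⟩

lemma ae_branchInformation_pieceIndex (hf : Measurable f)
    (hmp : (volume.restrict (Icc 0 1)).map f = volume.restrict (Icc 0 1))
    (hd : ∀ t ∈ Ioo 0 1 \ (s : Set ℝ), HasDerivAt f (g t) t) :
    ∀ᵐ t ∂volume.restrict (Icc 0 1),
      branchInformation (graphPermuton f) (pieceIndex s) (t, f t) = Real.log |g t| := by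
  have hpiece (a : Fin (s.card + 1)) : ∀ᵐ t ∂volume.restrict (Icc 0 1), t ∈ piece s a →
      ENNReal.ofReal |g t| *
        (Icc 0 1).indicator (branchDensity (graphPermuton f) (pieceIndex s) a) (f t) = 1 := by
    have hPI : piece s a ⊆ Icc 0 1 := fun t ht => Ioo_subset_Icc_self ht.1.1
    have hPc : {t | pieceIndex s t = a} =ᵐ[volume.restrict (Icc 0 1)] piece s a :=
      ae_mem_piece.mono fun t ht => propext ⟨fun hta => hta ▸ ht, fun hta => hta.2⟩
    have hinj : InjOn f (piece s a) := (strictMonoOn_or_strictAntiOn_piece hf hmp hd a).elim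
      StrictMonoOn.injOn StrictAntiOn.injOn
    exact ae_restrict_of_ae <| (ae_restrict_iff' (measurableSet_piece a)).1 <|
      ae_abs_deriv_mul_branchDensity_eq_one hf hmp monotone_pieceIndex.measurable
        (measurableSet_piece a) hPI hPc (fun t ht => hd t ht.1) hinj
  filter_upwards [ae_all_iff.2 hpiece, ae_mem_piece] with t hall ht
  have hone := hall _ ht
  have hft : f t ∈ Icc 0 1 := by
    by_contra hft
    simp [indicator_of_notMem hft] at hone
  rw [indicator_of_mem hft] at hone
  rw [branchInformation, ENNReal.eq_inv_of_mul_eq_one_left ((mul_comm _ _).trans hone),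
    ENNReal.toReal_inv, Real.log_inv, neg_neg, ENNReal.toReal_ofReal (abs_nonneg _)]

lemma ofReal_integral_branchInformation_pieceIndex (hf : Measurable f)
    (hmp : (volume.restrict (Icc 0 1)).map f = volume.restrict (Icc 0 1))
    (hd : ∀ t ∈ Ioo 0 1 \ (s : Set ℝ), HasDerivAt f (g t) t) :
    ENNReal.ofReal
        (∫ p, branchInformation (graphPermuton f) (pieceIndex s) p ∂graphPermuton f) =
      ∫⁻ t in Icc 0 1, ENNReal.ofReal (Real.log |g t|) := by
  have := isProbabilityMeasure_graphPermuton hf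
  have hc : Measurable (pieceIndex s) := monotone_pieceIndex.measurable
  have hgraph : Measurable fun t => (t, f t) := measurable_id.prodMk hf
  calc _ = ∫⁻ p, ENNReal.ofReal (branchInformation (graphPermuton f) (pieceIndex s) p)
          ∂graphPermuton f :=
        ofReal_integral_eq_lintegral_ofReal (integrable_branchInformation hc)
          (ae_branchInformation_nonneg hc)
    _ = ∫⁻ t in Icc 0 1, ENNReal.ofReal
          (branchInformation (graphPermuton f) (pieceIndex s) (t, f t)) :=
        lintegral_map (measurable_branchInformation hc).ennreal_ofReal hgraph
    _ = ∫⁻ t in Icc 0 1, ENNReal.ofReal (Real.log |g t|) :=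
        lintegral_congr_ae <| (ae_branchInformation_pieceIndex hf hmp hd).mono fun t ht =>
          congrArg ENNReal.ofReal ht

end Piecewise

lemma exists_mem_Ioo_castSucc_succ {α : Type*} [LinearOrder α] {k : ℕ} {x : Fin (k + 1) → α}
    {t : α} (h₀ : x 0 < t) (hk : t < x (Fin.last k)) (ht : t ∉ range x) :
    ∃ i : Fin k, t ∈ Ioo (x i.castSucc) (x i.succ) := by
  by_contra! h
  have hlt (j : Fin (k + 1)) : x j < t := by
    induction j using Fin.induction with
    | zero => exact h₀
    | succ i ih =>
      exact (not_lt.1 fun hlt => h i ⟨ih, hlt⟩).lt_of_ne fun heq => ht ⟨_, heq⟩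
  exact (hlt (Fin.last k)).not_gt hk

end Permuton

open Permuton in
theorem samplingEntropy_div_tendsto_log_deriv_integral_general {f g : ℝ → ℝ} (hf : Measurable f)
    (hmp : (volume.restrict (Set.Icc (0 : ℝ) 1)).map f = volume.restrict (Set.Icc (0 : ℝ) 1))
    {s : Set ℝ} (hs : s.Finite) (hderiv : ∀ t ∈ Set.Ioo (0 : ℝ) 1 \ s, HasDerivAt f (g t) t) :
    Tendsto (fun n : ℕ => ENNReal.ofReal (samplingEntropy (graphPermuton f) n / n)) atTop
      (nhds (∫⁻ t in Set.Icc (0 : ℝ) 1, ENNReal.ofReal (Real.log |g t|))) := by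
  lift s to Finset ℝ using hs
  have := isProbabilityMeasure_graphPermuton hf
  have : NullSingletonClass ((graphPermuton f).map Prod.fst) := by
    rw [map_fst_graphPermuton hf]
    infer_instance
  rw [← ofReal_integral_branchInformation_pieceIndex hf hmp hderiv]
  exact ENNReal.tendsto_ofReal <| tendsto_samplingEntropy_div
    ((map_snd_graphPermuton hf).trans hmp) monotone_pieceIndex
    (hasMonotoneBranches_pieceIndex hf hmp hderiv) (ae_graphPermuton_snd_eq hf)

/-- If f : [0,1] → [0,1] preserves Lebesgue measure and is piecewise continuously
differentiable with finitely many pieces (with derivative g on the open pieces), then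
H_n(μ_f)/n → ∫₀¹ log |f'|, where the limit is taken in [0,∞] (value +∞ allowed). -/
theorem samplingEntropy_div_tendsto_log_deriv_integral
    (f g : ℝ → ℝ) (hmeas : Measurable f)
    (hmaps : Set.MapsTo f (Set.Icc (0:ℝ) 1) (Set.Icc (0:ℝ) 1))
    (hmp : Measure.map f (volume.restrict (Set.Icc (0:ℝ) 1)) =
      volume.restrict (Set.Icc (0:ℝ) 1))
    (k : ℕ) (x : Fin (k + 1) → ℝ) (hx0 : x 0 = 0) (hxk : x (Fin.last k) = 1)
    (hmono : StrictMono x)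
    (hderiv : ∀ i : Fin k, ∀ t ∈ Set.Ioo (x i.castSucc) (x i.succ), HasDerivAt f (g t) t)
    (hcont : ∀ i : Fin k, ContinuousOn g (Set.Ioo (x i.castSucc) (x i.succ))) :
    Tendsto (fun n : ℕ => ENNReal.ofReal (samplingEntropy (graphPermuton f) n / n)) atTop
      (nhds (∫⁻ t in Set.Icc (0:ℝ) 1, ENNReal.ofReal (Real.log |g t|))) := by
  refine samplingEntropy_div_tendsto_log_deriv_integral_general hmeas hmp
    (Set.finite_range x) fun t ht => ?_
  obtain ⟨i, hi⟩ := Permuton.exists_mem_Ioo_castSucc_succ (hx0 ▸ ht.1.1) (hxk ▸ ht.1.2) ht.2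
  exact hderiv i t hi
end
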